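/- Under the standing assumptions (α ∈ (1/3,1/2), T > 0, α-Hölder rough path 𝐗, monotone family of interpolation spaces, analytic semigroup S with the scale bounds, F satisfying (F), G satisfying (G)), let (y, G(y)) ∈ D^{2α}_{X,γ} be a solution of the rough evolution equation dy = (Ay + F(y))dt + G(y)d𝐗 on [0,T] with initial data y₀ ∈ B_γ. Then, with η := (α − σ) ∧ (1 − δ), the a-priori estimate ‖y, G(y)‖_{X,2α,γ} ≲ 1 + |y₀|_{B_γ} + T^η ‖y, G(y)‖_{X,2α,γ} holds, with a constant independent of y₀ and uniform in T on compact intervals. -/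

import Mathlib

open Set

/-- A monotone family of interpolation spaces: a scale `(B_θ)_{θ ∈ ℝ}` of separable Banach
spaces realised inside a common ambient real vector space `E`; `Mem θ x` means `x ∈ B_θ`,
`N θ x` denotes the norm `|x|_θ`.  For `β₁ ≤ β₂` the space `B_{β₂}` is contained in `B_{β₁}`
with dense and continuous embedding, and the interpolation inequality holds. -/
structure BanachScale where
  E : Type
  [inst_add : AddCommGroup E]
  [inst_mod : Module ℝ E]
  Mem : ℝ → E → Prop
  N : ℝ → E → ℝ
  mem_zero : ∀ θ : ℝ, Mem θ 0
  mem_add : ∀ (θ : ℝ) (x y : E), Mem θ x → Mem θ y → Mem θ (x + y)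
  mem_neg : ∀ (θ : ℝ) (x : E), Mem θ x → Mem θ (-x)
  mem_smul : ∀ (θ c : ℝ) (x : E), Mem θ x → Mem θ (c • x)
  N_nonneg : ∀ (θ : ℝ) (x : E), 0 ≤ N θ x
  N_zero : ∀ θ : ℝ, N θ 0 = 0
  N_eq_zero : ∀ (θ : ℝ) (x : E), Mem θ x → N θ x = 0 → x = 0
  N_add : ∀ (θ : ℝ) (x y : E), Mem θ x → Mem θ y → N θ (x + y) ≤ N θ x + N θ y
  N_smul : ∀ (θ c : ℝ) (x : E), N θ (c • x) = |c| * N θ x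
  mem_mono : ∀ ⦃β₁ β₂ : ℝ⦄, β₁ ≤ β₂ → ∀ x : E, Mem β₂ x → Mem β₁ x
  embed_bound : ∀ ⦃β₁ β₂ : ℝ⦄, β₁ ≤ β₂ → ∃ C > (0:ℝ), ∀ x : E, Mem β₂ x → N β₁ x ≤ C * N β₂ x
  embed_dense : ∀ ⦃β₁ β₂ : ℝ⦄, β₁ ≤ β₂ → ∀ x : E, Mem β₁ x → ∀ ε > (0:ℝ),
    ∃ y : E, Mem β₂ y ∧ N β₁ (x - y) < ε
  complete : ∀ (θ : ℝ) (u : ℕ → E), (∀ n, Mem θ (u n)) →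
    (∀ ε > (0:ℝ), ∃ M : ℕ, ∀ m ≥ M, ∀ n ≥ M, N θ (u m - u n) < ε) →
    ∃ x : E, Mem θ x ∧ ∀ ε > (0:ℝ), ∃ M : ℕ, ∀ n ≥ M, N θ (u n - x) < ε
  separable : ∀ θ : ℝ, ∃ D : Set E, D.Countable ∧ (∀ x ∈ D, Mem θ x) ∧
    ∀ x : E, Mem θ x → ∀ ε > (0:ℝ), ∃ y ∈ D, N θ (x - y) < ε
  interp : ∀ ⦃θ β γ : ℝ⦄, θ ≤ β → β ≤ γ → ∃ C > (0:ℝ), ∀ x : E, Mem γ x →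
    N β x ^ (γ - θ) ≤ C * (N θ x ^ (γ - β) * N γ x ^ (β - θ))

attribute [instance] BanachScale.inst_add BanachScale.inst_mod

/-- An analytic `C₀`-semigroup `(S(t))_{t ≥ 0}` acting on a scale of Banach spaces,
together with the standard parabolic bounds
`|(S(t) - Id)x|_η ≲ t^σ |x|_{η+σ}` and `|S(t)x|_{η+σ} ≲ t^{-σ} |x|_η` for `σ ∈ [0,1]`,
with constants uniform on compact time intervals. -/
structure ScaleSemigroup (𝓑 : BanachScale) where
  S : ℝ → 𝓑.E →ₗ[ℝ] 𝓑.E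
  S_id : ∀ x : 𝓑.E, S 0 x = x
  S_comp : ∀ s t : ℝ, 0 ≤ s → 0 ≤ t → ∀ x : 𝓑.E, S (s + t) x = S s (S t x)
  S_mem : ∀ (t θ : ℝ) (x : 𝓑.E), 0 ≤ t → 𝓑.Mem θ x → 𝓑.Mem θ (S t x)
  S_bounded : ∀ θ Tm : ℝ, 0 < Tm → ∃ C > (0:ℝ), ∀ (t : ℝ) (x : 𝓑.E), 0 ≤ t → t ≤ Tm →
    𝓑.Mem θ x → 𝓑.N θ (S t x) ≤ C * 𝓑.N θ x
  S_strong_cont : ∀ (θ : ℝ) (x : 𝓑.E), 𝓑.Mem θ x → ∀ ε > (0:ℝ), ∃ δ > (0:ℝ),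
    ∀ t : ℝ, 0 < t → t < δ → 𝓑.N θ (S t x - x) < ε
  S_smoothing : ∀ η σ Tm : ℝ, 0 ≤ σ → σ ≤ 1 → 0 < Tm → ∃ C > (0:ℝ),
    ∀ (t : ℝ) (x : 𝓑.E), 0 < t → t ≤ Tm → 𝓑.Mem η x →
      𝓑.Mem (η + σ) (S t x) ∧ 𝓑.N (η + σ) (S t x) ≤ C * t ^ (-σ) * 𝓑.N η x
  S_holdId : ∀ η σ Tm : ℝ, 0 ≤ σ → σ ≤ 1 → 0 < Tm → ∃ C > (0:ℝ),
    ∀ (t : ℝ) (x : 𝓑.E), 0 < t → t ≤ Tm → 𝓑.Mem (η + σ) x →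
      𝓑.N η (S t x - x) ≤ C * t ^ σ * 𝓑.N (η + σ) x

/-- A (one-dimensional) `α`-Hölder rough path `𝐗 = (X, X⁽²⁾)` on `[0,T]`:
`X ∈ C^α`, `X₀ = 0`, `X⁽²⁾ ∈ C^{2α}` on the simplex, satisfying Chen's relation. -/
structure RoughPath (α T : ℝ) where
  X : ℝ → ℝ
  X2 : ℝ → ℝ → ℝ
  X_zero : X 0 = 0
  holderX : ∃ C : ℝ, ∀ s t : ℝ, 0 ≤ s → s ≤ t → t ≤ T → |X t - X s| ≤ C * (t - s) ^ α
  holderX2 : ∃ C : ℝ, ∀ s t : ℝ, 0 ≤ s → s ≤ t → t ≤ T → |X2 s t| ≤ C * (t - s) ^ (2 * α)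
  chen : ∀ s u t : ℝ, 0 ≤ s → s ≤ u → u ≤ t → t ≤ T →
    X2 s t - X2 s u - X2 u t = (X u - X s) * (X t - X u)

/-- The supremum norm `‖f‖_{∞, B_θ}` over `[0,T]`. -/
noncomputable def scaleSupNorm (𝓑 : BanachScale) (θ T : ℝ) (f : ℝ → 𝓑.E) : ℝ :=
  sSup {r : ℝ | ∃ t : ℝ, 0 ≤ t ∧ t ≤ T ∧ r = 𝓑.N θ (f t)}

/-- The `η`-Hölder seminorm (in `B_θ`) of a two-parameter function on `[0,T]`. -/
noncomputable def scaleHolderNorm2 (𝓑 : BanachScale) (θ η T : ℝ) (F : ℝ → ℝ → 𝓑.E) : ℝ :=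
  sSup {r : ℝ | ∃ s t : ℝ, 0 ≤ s ∧ s < t ∧ t ≤ T ∧ r = 𝓑.N θ (F s t) / (t - s) ^ η}

/-- The `η`-Hölder seminorm `‖f‖_{η, B_θ}` over `[0,T]`. -/
noncomputable def scaleHolderNorm (𝓑 : BanachScale) (θ η T : ℝ) (f : ℝ → 𝓑.E) : ℝ :=
  scaleHolderNorm2 𝓑 θ η T fun s t => f t - f s

/-- The `η`-Hölder seminorm of a real-valued path on `[0,T]`. -/
noncomputable def realHolderNorm (η T : ℝ) (X : ℝ → ℝ) : ℝ :=
  sSup {r : ℝ | ∃ s t : ℝ, 0 ≤ s ∧ s < t ∧ t ≤ T ∧ r = |X t - X s| / (t - s) ^ η}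

/-- `f : [0,T] → B_θ` is `η`-Hölder continuous. -/
def IsHolderOn (𝓑 : BanachScale) (θ η T : ℝ) (f : ℝ → 𝓑.E) : Prop :=
  ∃ C : ℝ, ∀ s t : ℝ, 0 ≤ s → s ≤ t → t ≤ T → 𝓑.N θ (f t - f s) ≤ C * (t - s) ^ η

/-- The remainder `R^y_{s,t} = y_t - y_s - y'_s X_{s,t}` of a controlled rough path. -/
def gubRemainder (𝓑 : BanachScale) (X : ℝ → ℝ) (y y' : ℝ → 𝓑.E) (s t : ℝ) : 𝓑.E :=
  y t - y s - (X t - X s) • y' s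

/-- `(y, y')` is a controlled rough path in `D^{2α}_{X,γ}([0,T])`:
`y ∈ C([0,T]; B_γ)`, `y' ∈ C([0,T]; B_{γ-α}) ∩ C^α([0,T]; B_{γ-2α})` and the remainder
`R^y ∈ C^α([0,T]; B_{γ-α}) ∩ C^{2α}([0,T]; B_{γ-2α})`. -/
structure IsControlledPath (𝓑 : BanachScale) (α γ T : ℝ) (X : ℝ → ℝ)
    (y y' : ℝ → 𝓑.E) : Prop where
  mem_y : ∀ t : ℝ, 0 ≤ t → t ≤ T → 𝓑.Mem γ (y t)
  mem_y' : ∀ t : ℝ, 0 ≤ t → t ≤ T → 𝓑.Mem (γ - α) (y' t)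
  cont_y : ∀ t : ℝ, 0 ≤ t → t ≤ T → ∀ ε > (0:ℝ), ∃ δ > (0:ℝ), ∀ s : ℝ, 0 ≤ s → s ≤ T →
    |s - t| < δ → 𝓑.N γ (y s - y t) < ε
  cont_y' : ∀ t : ℝ, 0 ≤ t → t ≤ T → ∀ ε > (0:ℝ), ∃ δ > (0:ℝ), ∀ s : ℝ, 0 ≤ s → s ≤ T →
    |s - t| < δ → 𝓑.N (γ - α) (y' s - y' t) < ε
  holder_y' : ∃ C : ℝ, ∀ s t : ℝ, 0 ≤ s → s ≤ t → t ≤ T →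
    𝓑.N (γ - 2 * α) (y' t - y' s) ≤ C * (t - s) ^ α
  rem_alpha : ∃ C : ℝ, ∀ s t : ℝ, 0 ≤ s → s ≤ t → t ≤ T →
    𝓑.N (γ - α) (gubRemainder 𝓑 X y y' s t) ≤ C * (t - s) ^ α
  rem_two_alpha : ∃ C : ℝ, ∀ s t : ℝ, 0 ≤ s → s ≤ t → t ≤ T →
    𝓑.N (γ - 2 * α) (gubRemainder 𝓑 X y y' s t) ≤ C * (t - s) ^ (2 * α)

/-- The norm `‖(y,y')‖_{X,2α,γ}` on `D^{2α}_{X,γ}([0,T])`. -/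
noncomputable def crpNorm (𝓑 : BanachScale) (α γ T : ℝ) (X : ℝ → ℝ)
    (y y' : ℝ → 𝓑.E) : ℝ :=
  scaleSupNorm 𝓑 γ T y + scaleSupNorm 𝓑 (γ - α) T y'
    + scaleHolderNorm 𝓑 (γ - 2 * α) α T y'
    + scaleHolderNorm2 𝓑 (γ - α) α T (gubRemainder 𝓑 X y y')
    + scaleHolderNorm2 𝓑 (γ - 2 * α) (2 * α) T (gubRemainder 𝓑 X y y')

/-- A partition `a = t_0 < t_1 < ⋯ < t_n = b` of the interval `[a,b]`. -/
structure RPartition (a b : ℝ) where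
  n : ℕ
  t : ℕ → ℝ
  n_pos : 0 < n
  strict : ∀ i : ℕ, i < n → t i < t (i + 1)
  first : t 0 = a
  last : t n = b

/-- The mesh `|π|` of a partition. -/
noncomputable def RPartition.mesh {a b : ℝ} (π : RPartition a b) : ℝ :=
  sSup {r : ℝ | ∃ i : ℕ, i < π.n ∧ r = π.t (i + 1) - π.t i}

/-- The compensated Riemann sum `Σ_{[u,v] ∈ π} S(b - u)[y_u X_{u,v} + y'_u X⁽²⁾_{u,v}]`. -/
noncomputable def convRiemannSum (𝓑 : BanachScale) (Sg : ScaleSemigroup 𝓑)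
    (X : ℝ → ℝ) (X2 : ℝ → ℝ → ℝ) (y y' : ℝ → 𝓑.E) {a b : ℝ} (π : RPartition a b) : 𝓑.E :=
  ∑ i ∈ Finset.range π.n,
    Sg.S (b - π.t i)
      ((X (π.t (i + 1)) - X (π.t i)) • y (π.t i) + X2 (π.t i) (π.t (i + 1)) • y' (π.t i))

/-- `I` is the rough convolution `∫_a^b S(b-r) y_r d𝐗_r`, i.e. the limit in `B_θ` of the
compensated Riemann sums over partitions of `[a,b]` with vanishing mesh. -/
def IsRoughConvolution (𝓑 : BanachScale) (Sg : ScaleSemigroup 𝓑) (X : ℝ → ℝ)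
    (X2 : ℝ → ℝ → ℝ) (y y' : ℝ → 𝓑.E) (θ a b : ℝ) (I : 𝓑.E) : Prop :=
  𝓑.Mem θ I ∧ ∀ ε > (0:ℝ), ∃ δ > (0:ℝ), ∀ π : RPartition a b, π.mesh < δ →
    𝓑.N θ (convRiemannSum 𝓑 Sg X X2 y y' π - I) ≤ ε

/-- Left Riemann sum of a `B`-valued function. -/
noncomputable def intRiemannSum (𝓑 : BanachScale) (f : ℝ → 𝓑.E) {a b : ℝ}
    (π : RPartition a b) : 𝓑.E :=
  ∑ i ∈ Finset.range π.n, (π.t (i + 1) - π.t i) • f (π.t i)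

/-- `I = ∫_a^b f(s) ds` as a `B_θ`-valued Riemann integral. -/
def IsRiemannIntegral (𝓑 : BanachScale) (θ : ℝ) (f : ℝ → 𝓑.E) (a b : ℝ) (I : 𝓑.E) : Prop :=
  𝓑.Mem θ I ∧ ∀ ε > (0:ℝ), ∃ δ > (0:ℝ), ∀ π : RPartition a b, π.mesh < δ →
    𝓑.N θ (intRiemannSum 𝓑 f π - I) ≤ ε

/-- Assumption (F): the drift `F : B_γ → B_{γ-δ}` is locally Lipschitz continuous and
satisfies a linear growth condition. -/
structure AssumptionF (𝓑 : BanachScale) (γ δ : ℝ) (F : 𝓑.E → 𝓑.E) : Prop where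
  maps : ∀ x : 𝓑.E, 𝓑.Mem γ x → 𝓑.Mem (γ - δ) (F x)
  locLip : ∀ R > (0:ℝ), ∃ L : ℝ, ∀ x y : 𝓑.E, 𝓑.Mem γ x → 𝓑.Mem γ y →
    𝓑.N γ x ≤ R → 𝓑.N γ y ≤ R → 𝓑.N (γ - δ) (F x - F y) ≤ L * 𝓑.N γ (x - y)
  linGrowth : ∃ C : ℝ, ∀ x : 𝓑.E, 𝓑.Mem γ x → 𝓑.N (γ - δ) (F x) ≤ C * (1 + 𝓑.N γ x)

/-- Assumption (G): for `θ ∈ {0, α, 2α}` the diffusion coefficient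
`G : B_{γ-θ} → B_{γ-θ-σ}` is three times continuously (Fréchet) differentiable with bounded
derivatives `DG`, `D²G`, `D³G`, and the derivative of `x ↦ DG(x)G(x) : B_{γ-α} → B_{γ-2α-σ}`
is bounded. -/
structure AssumptionG (𝓑 : BanachScale) (α σ γ : ℝ) (G : 𝓑.E → 𝓑.E)
    (DG : 𝓑.E → 𝓑.E →ₗ[ℝ] 𝓑.E)
    (D2G : 𝓑.E → 𝓑.E →ₗ[ℝ] 𝓑.E →ₗ[ℝ] 𝓑.E)
    (D3G : 𝓑.E → 𝓑.E →ₗ[ℝ] 𝓑.E →ₗ[ℝ] 𝓑.E →ₗ[ℝ] 𝓑.E) : Prop where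
  maps : ∀ θ ∈ ({0, α, 2 * α} : Set ℝ), ∀ x : 𝓑.E, 𝓑.Mem (γ - θ) x → 𝓑.Mem (γ - θ - σ) (G x)
  DG_maps : ∀ θ ∈ ({0, α, 2 * α} : Set ℝ), ∀ x h : 𝓑.E, 𝓑.Mem (γ - θ) x → 𝓑.Mem (γ - θ) h →
    𝓑.Mem (γ - θ - σ) (DG x h)
  DG_bound : ∀ θ ∈ ({0, α, 2 * α} : Set ℝ), ∃ C : ℝ, ∀ x h : 𝓑.E, 𝓑.Mem (γ - θ) x →
    𝓑.Mem (γ - θ) h → 𝓑.N (γ - θ - σ) (DG x h) ≤ C * 𝓑.N (γ - θ) h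
  DG_isDeriv : ∀ θ ∈ ({0, α, 2 * α} : Set ℝ), ∀ x : 𝓑.E, 𝓑.Mem (γ - θ) x → ∀ ε > (0:ℝ),
    ∃ δ > (0:ℝ), ∀ h : 𝓑.E, 𝓑.Mem (γ - θ) h → 𝓑.N (γ - θ) h < δ →
      𝓑.N (γ - θ - σ) (G (x + h) - G x - DG x h) ≤ ε * 𝓑.N (γ - θ) h
  D2G_maps : ∀ θ ∈ ({0, α, 2 * α} : Set ℝ), ∀ x h k : 𝓑.E, 𝓑.Mem (γ - θ) x →
    𝓑.Mem (γ - θ) h → 𝓑.Mem (γ - θ) k → 𝓑.Mem (γ - θ - σ) (D2G x h k)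
  D2G_bound : ∀ θ ∈ ({0, α, 2 * α} : Set ℝ), ∃ C : ℝ, ∀ x h k : 𝓑.E, 𝓑.Mem (γ - θ) x →
    𝓑.Mem (γ - θ) h → 𝓑.Mem (γ - θ) k →
    𝓑.N (γ - θ - σ) (D2G x h k) ≤ C * (𝓑.N (γ - θ) h * 𝓑.N (γ - θ) k)
  D2G_isDeriv : ∀ θ ∈ ({0, α, 2 * α} : Set ℝ), ∀ x : 𝓑.E, 𝓑.Mem (γ - θ) x → ∀ ε > (0:ℝ),
    ∃ δ > (0:ℝ), ∀ h : 𝓑.E, 𝓑.Mem (γ - θ) h → 𝓑.N (γ - θ) h < δ → ∀ k : 𝓑.E,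
      𝓑.Mem (γ - θ) k →
      𝓑.N (γ - θ - σ) (DG (x + h) k - DG x k - D2G x h k) ≤ ε * (𝓑.N (γ - θ) h * 𝓑.N (γ - θ) k)
  D3G_maps : ∀ θ ∈ ({0, α, 2 * α} : Set ℝ), ∀ x h k l : 𝓑.E, 𝓑.Mem (γ - θ) x →
    𝓑.Mem (γ - θ) h → 𝓑.Mem (γ - θ) k → 𝓑.Mem (γ - θ) l → 𝓑.Mem (γ - θ - σ) (D3G x h k l)
  D3G_bound : ∀ θ ∈ ({0, α, 2 * α} : Set ℝ), ∃ C : ℝ, ∀ x h k l : 𝓑.E, 𝓑.Mem (γ - θ) x →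
    𝓑.Mem (γ - θ) h → 𝓑.Mem (γ - θ) k → 𝓑.Mem (γ - θ) l →
    𝓑.N (γ - θ - σ) (D3G x h k l) ≤ C * (𝓑.N (γ - θ) h * (𝓑.N (γ - θ) k * 𝓑.N (γ - θ) l))
  D3G_isDeriv : ∀ θ ∈ ({0, α, 2 * α} : Set ℝ), ∀ x : 𝓑.E, 𝓑.Mem (γ - θ) x → ∀ ε > (0:ℝ),
    ∃ δ > (0:ℝ), ∀ h : 𝓑.E, 𝓑.Mem (γ - θ) h → 𝓑.N (γ - θ) h < δ → ∀ k l : 𝓑.E,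
      𝓑.Mem (γ - θ) k → 𝓑.Mem (γ - θ) l →
      𝓑.N (γ - θ - σ) (D2G (x + h) k l - D2G x k l - D3G x h k l)
        ≤ ε * (𝓑.N (γ - θ) h * (𝓑.N (γ - θ) k * 𝓑.N (γ - θ) l))
  D3G_cont : ∀ θ ∈ ({0, α, 2 * α} : Set ℝ), ∀ x : 𝓑.E, 𝓑.Mem (γ - θ) x → ∀ ε > (0:ℝ),
    ∃ δ > (0:ℝ), ∀ x' : 𝓑.E, 𝓑.Mem (γ - θ) x' → 𝓑.N (γ - θ) (x' - x) < δ →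
      ∀ h k l : 𝓑.E, 𝓑.Mem (γ - θ) h → 𝓑.Mem (γ - θ) k → 𝓑.Mem (γ - θ) l →
      𝓑.N (γ - θ - σ) (D3G x' h k l - D3G x h k l)
        ≤ ε * (𝓑.N (γ - θ) h * (𝓑.N (γ - θ) k * 𝓑.N (γ - θ) l))
  DGG_deriv_bounded : ∃ (L : 𝓑.E → 𝓑.E →ₗ[ℝ] 𝓑.E) (C : ℝ),
    (∀ x h : 𝓑.E, 𝓑.Mem (γ - α) x → 𝓑.Mem (γ - α) h →
      𝓑.Mem (γ - 2 * α - σ) (L x h) ∧ 𝓑.N (γ - 2 * α - σ) (L x h) ≤ C * 𝓑.N (γ - α) h) ∧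
    ∀ x : 𝓑.E, 𝓑.Mem (γ - α) x → ∀ ε > (0:ℝ), ∃ δ > (0:ℝ), ∀ h : 𝓑.E, 𝓑.Mem (γ - α) h →
      𝓑.N (γ - α) h < δ →
      𝓑.N (γ - 2 * α - σ) (DG (x + h) (G (x + h)) - DG x (G x) - L x h) ≤ ε * 𝓑.N (γ - α) h

/-- `y` is a (mild) solution on `[0,T']` of the rough evolution equation
`dy = (Ay + F(y))dt + G(y)d𝐗`, `y(0) = y₀`: the pair `(y, G(y))` is a controlled rough
path in `D^{2α}_{X,γ}([0,T'])` and the mild formulation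
`y_t = S(t)y₀ + ∫₀ᵗ S(t-s)F(y_s)ds + ∫₀ᵗ S(t-s)G(y_s)d𝐗_s` holds, the rough convolution
being the limit of the compensated Riemann sums
`Σ S(t-u)[G(y_u)X_{u,v} + DG(y_u)G(y_u)X⁽²⁾_{u,v}]`. -/
structure IsSolution (𝓑 : BanachScale) (Sg : ScaleSemigroup 𝓑) (α γ : ℝ)
    (X : ℝ → ℝ) (X2 : ℝ → ℝ → ℝ) (F G : 𝓑.E → 𝓑.E) (DG : 𝓑.E → 𝓑.E →ₗ[ℝ] 𝓑.E)
    (y₀ : 𝓑.E) (T' : ℝ) (y : ℝ → 𝓑.E) : Prop where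
  controlled : IsControlledPath 𝓑 α γ T' X y fun t => G (y t)
  init : y 0 = y₀
  mild : ∀ t : ℝ, 0 < t → t ≤ T' → ∃ D Z : 𝓑.E,
    IsRiemannIntegral 𝓑 γ (fun s => Sg.S (t - s) (F (y s))) 0 t D ∧
    IsRoughConvolution 𝓑 Sg X X2 (fun s => G (y s)) (fun s => DG (y s) (G (y s)))
      (γ - 2 * α) 0 t Z ∧
    y t = Sg.S t y₀ + D + Z

/-- The Borel σ-algebra of `B_θ`, generated by the `|·|_θ`-balls of `B_θ`,
as a σ-algebra on the ambient space. -/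
def scaleBorel (𝓑 : BanachScale) (θ : ℝ) : MeasurableSpace 𝓑.E :=
  MeasurableSpace.generateFrom
    {s : Set 𝓑.E | ∃ (c : 𝓑.E) (r : ℝ), s = {x | 𝓑.Mem θ x ∧ 𝓑.N θ (x - c) < r}}


namespace RE

open Set Filter Topology

variable {𝓑 : BanachScale}

lemma N_neg (θ : ℝ) (x : 𝓑.E) : 𝓑.N θ (-x) = 𝓑.N θ x := by
  have := 𝓑.N_smul θ (-1) x
  simpa using this

lemma mem_sub {θ : ℝ} {x y : 𝓑.E} (hx : 𝓑.Mem θ x) (hy : 𝓑.Mem θ y) : 𝓑.Mem θ (x - y) := by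
  rw [sub_eq_add_neg]
  exact 𝓑.mem_add θ _ _ hx (𝓑.mem_neg θ _ hy)

lemma N_sub_le {θ : ℝ} {x y : 𝓑.E} (hx : 𝓑.Mem θ x) (hy : 𝓑.Mem θ y) :
    𝓑.N θ (x - y) ≤ 𝓑.N θ x + 𝓑.N θ y := by
  rw [sub_eq_add_neg, ← N_neg θ y]
  exact 𝓑.N_add θ _ _ hx (𝓑.mem_neg θ _ hy)

lemma N_sub_comm (θ : ℝ) (x y : 𝓑.E) : 𝓑.N θ (x - y) = 𝓑.N θ (y - x) := by
  rw [← N_neg, neg_sub]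

lemma N_tri {θ : ℝ} {x y z : 𝓑.E} (hx : 𝓑.Mem θ x) (hy : 𝓑.Mem θ y) (hz : 𝓑.Mem θ z) :
    𝓑.N θ (x - z) ≤ 𝓑.N θ (x - y) + 𝓑.N θ (y - z) := by
  rw [← sub_add_sub_cancel x y z]
  exact 𝓑.N_add θ _ _ (mem_sub hx hy) (mem_sub hy hz)

lemma N_le_sub_add {θ : ℝ} {x y : 𝓑.E} (hx : 𝓑.Mem θ x) (hy : 𝓑.Mem θ y) :
    𝓑.N θ x ≤ 𝓑.N θ (x - y) + 𝓑.N θ y := by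
  have := 𝓑.N_add θ _ _ (mem_sub hx hy) hy
  simpa using this

lemma mem_sum {θ : ℝ} {f : ℕ → 𝓑.E} (n : ℕ) (h : ∀ i < n, 𝓑.Mem θ (f i)) :
    𝓑.Mem θ (∑ i ∈ Finset.range n, f i) := by
  induction n with
  | zero => simpa using 𝓑.mem_zero θ
  | succ n ih =>
    rw [Finset.sum_range_succ]
    exact 𝓑.mem_add _ _ _ (ih fun i hi => h i (by omega)) (h n (by omega))

lemma N_sum {θ : ℝ} {f : ℕ → 𝓑.E} (n : ℕ) (h : ∀ i < n, 𝓑.Mem θ (f i)) :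
    𝓑.N θ (∑ i ∈ Finset.range n, f i) ≤ ∑ i ∈ Finset.range n, 𝓑.N θ (f i) := by
  induction n with
  | zero => simp [𝓑.N_zero θ]
  | succ n ih =>
    rw [Finset.sum_range_succ, Finset.sum_range_succ]
    have h1 := 𝓑.N_add θ _ _ (mem_sum n fun i hi => h i (by omega)) (h n (by omega))
    have h2 := ih fun i hi => h i (by omega)
    linarith

/-- the space `B_θ` as a submodule -/
def sub (𝓑 : BanachScale) (θ : ℝ) : Submodule ℝ 𝓑.E where
  carrier := {x | 𝓑.Mem θ x}
  add_mem' := fun ha hb => 𝓑.mem_add θ _ _ ha hb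
  zero_mem' := 𝓑.mem_zero θ
  smul_mem' := fun c x hx => 𝓑.mem_smul θ c x hx

lemma mvt {θ C : ℝ} (f f' : ℝ → 𝓑.E)
    (hf : ∀ r, 0 ≤ r → r ≤ 1 → 𝓑.Mem θ (f r)) (hf' : ∀ r, 0 ≤ r → r ≤ 1 → 𝓑.Mem θ (f' r))
    (hd : ∀ r, 0 ≤ r → r ≤ 1 → ∀ ε > (0:ℝ), ∃ δ > (0:ℝ), ∀ q, 0 ≤ q → q ≤ 1 → |q - r| < δ →
      𝓑.N θ (f q - f r - (q - r) • f' r) ≤ ε * |q - r|)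
    (hb : ∀ r, 0 ≤ r → r ≤ 1 → 𝓑.N θ (f' r) ≤ C) : 𝓑.N θ (f 1 - f 0) ≤ C := by
  let _ : Norm (sub 𝓑 θ) := ⟨fun x => 𝓑.N θ x.1⟩
  have core : NormedSpace.Core ℝ (sub 𝓑 θ) :=
    { norm_nonneg := fun x => 𝓑.N_nonneg θ x.1
      norm_smul := fun c x => 𝓑.N_smul θ c x.1
      norm_triangle := fun x y => 𝓑.N_add θ _ _ x.2 y.2
      norm_eq_zero_iff := fun x => ⟨fun h => Subtype.ext (𝓑.N_eq_zero θ _ x.2 h),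
        fun h => by subst h; exact 𝓑.N_zero θ⟩ }
  let _ : NormedAddCommGroup (sub 𝓑 θ) := NormedAddCommGroup.ofCore core
  let _ : NormedSpace ℝ (sub 𝓑 θ) := NormedSpace.ofCore core
  classical
  let g : ℝ → sub 𝓑 θ := fun r => if h : 0 ≤ r ∧ r ≤ 1 then ⟨f r, hf r h.1 h.2⟩ else 0
  let g' : ℝ → sub 𝓑 θ := fun r => if h : 0 ≤ r ∧ r ≤ 1 then ⟨f' r, hf' r h.1 h.2⟩ else 0
  have hg : ∀ r, 0 ≤ r → r ≤ 1 → (g r).1 = f r := fun r h1 h2 => by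
    simp [g, h1, h2]
  have hg' : ∀ r, 0 ≤ r → r ≤ 1 → (g' r).1 = f' r := fun r h1 h2 => by
    simp [g', h1, h2]
  have key := norm_image_sub_le_of_norm_deriv_le_segment_01' (f := g) (f' := g') (C := C) ?_ ?_
  · have e : ‖g 1 - g 0‖ = 𝓑.N θ ((g 1).1 - (g 0).1) := rfl
    rw [e, hg 1 (by norm_num) le_rfl, hg 0 le_rfl (by norm_num)] at key
    exact key
  · intro r hr
    rw [hasDerivWithinAt_iff_isLittleO, Asymptotics.isLittleO_iff]
    intro ε hε
    obtain ⟨d, hd0, hd1⟩ := hd r hr.1 hr.2 ε hε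
    have h1 : ∀ᶠ q in 𝓝[Icc (0:ℝ) 1] r, q ∈ Icc (0:ℝ) 1 := self_mem_nhdsWithin
    have h2 : ∀ᶠ q in 𝓝[Icc (0:ℝ) 1] r, q ∈ Metric.ball r d :=
      mem_nhdsWithin_of_mem_nhds (Metric.ball_mem_nhds r hd0)
    filter_upwards [h1, h2] with q hq1 hq2
    have e : ‖g q - g r - (q - r) • g' r‖
      = 𝓑.N θ ((g q).1 - (g r).1 - (q - r) • (g' r).1) := rfl
    rw [e, hg q hq1.1 hq1.2, hg r hr.1 hr.2, hg' r hr.1 hr.2, Real.norm_eq_abs]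
    exact hd1 q hq1.1 hq1.2 (by simpa [Real.dist_eq] using hq2)
  · intro r hr
    have e : ‖g' r‖ = 𝓑.N θ (g' r).1 := rfl
    rw [e, hg' r hr.1 hr.2.le]
    exact hb r hr.1 hr.2.le

/-- convergence in `B_θ` -/
def Lim (𝓑 : BanachScale) (θ : ℝ) (u : ℕ → 𝓑.E) (x : 𝓑.E) : Prop :=
  Tendsto (fun n => 𝓑.N θ (u n - x)) atTop (𝓝 0)

lemma Lim.mono {a b : ℝ} (hab : a ≤ b) {u : ℕ → 𝓑.E} {x : 𝓑.E} (hu : ∀ n, 𝓑.Mem b (u n))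
    (hx : 𝓑.Mem b x) (h : Lim 𝓑 b u x) : Lim 𝓑 a u x := by
  obtain ⟨C, hC, hC'⟩ := 𝓑.embed_bound hab
  have : Tendsto (fun n => C * 𝓑.N b (u n - x)) atTop (𝓝 0) := by
    simpa using h.const_mul C
  exact squeeze_zero (fun n => 𝓑.N_nonneg _ _) (fun n => hC' _ (mem_sub (hu n) hx)) this

lemma Lim.unique {θ : ℝ} {u : ℕ → 𝓑.E} {x y : 𝓑.E} (hu : ∀ n, 𝓑.Mem θ (u n))
    (hx : 𝓑.Mem θ x) (hy : 𝓑.Mem θ y) (h : Lim 𝓑 θ u x) (h' : Lim 𝓑 θ u y) : x = y := by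
  have h1 : 𝓑.N θ (x - y) ≤ 0 := by
    have := h.add h'
    rw [add_zero] at this
    refine ge_of_tendsto' this fun n => ?_
    have := N_tri hx (hu n) hy
    rwa [N_sub_comm θ x (u n)] at this
  have h2 := 𝓑.N_eq_zero θ _ (mem_sub hx hy) (le_antisymm h1 (𝓑.N_nonneg _ _))
  exact sub_eq_zero.1 h2

lemma Lim.bound {θ B : ℝ} {u : ℕ → 𝓑.E} {x a : 𝓑.E} (hu : ∀ n, 𝓑.Mem θ (u n))
    (hx : 𝓑.Mem θ x) (ha : 𝓑.Mem θ a) (h : Lim 𝓑 θ u x) (hB : ∀ n, 𝓑.N θ (u n - a) ≤ B) :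
    𝓑.N θ (x - a) ≤ B := by
  have h' : Tendsto (fun n => 𝓑.N θ (u n - x) + B) atTop (𝓝 (0 + B)) := h.add_const B
  rw [zero_add] at h'
  refine ge_of_tendsto' h' fun n => ?_
  have := N_tri hx (hu n) ha
  rw [N_sub_comm θ x (u n)] at this
  linarith [hB n]

lemma Lim.sub {θ : ℝ} {u v : ℕ → 𝓑.E} {x y : 𝓑.E} (hu : ∀ n, 𝓑.Mem θ (u n))
    (hv : ∀ n, 𝓑.Mem θ (v n)) (hx : 𝓑.Mem θ x) (hy : 𝓑.Mem θ y) (h : Lim 𝓑 θ u x)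
    (h' : Lim 𝓑 θ v y) : Lim 𝓑 θ (fun n => u n - v n) (x - y) := by
  have := h.add h'
  rw [add_zero] at this
  refine squeeze_zero (fun n => 𝓑.N_nonneg _ _) (fun n => ?_) this
  have e : u n - v n - (x - y) = (u n - x) - (v n - y) := by abel
  rw [e]
  exact N_sub_le (mem_sub (hu n) hx) (mem_sub (hv n) hy)

lemma geom_lim {θ B q : ℝ} (hB : 0 ≤ B) (hq : 0 ≤ q) (hq1 : q < 1) {u : ℕ → 𝓑.E}
    (hu : ∀ n, 𝓑.Mem θ (u n)) (h : ∀ n, 𝓑.N θ (u (n+1) - u n) ≤ B * q ^ n) :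
    ∃ x, 𝓑.Mem θ x ∧ Lim 𝓑 θ u x ∧ 𝓑.N θ (x - u 0) ≤ B / (1 - q) := by
  have hq' : 0 < 1 - q := by linarith
  have key : ∀ n k, 𝓑.N θ (u (n+k) - u n) ≤ B * q ^ n * (1 - q ^ k) / (1 - q) := by
    intro n k
    induction k with
    | zero => simp [𝓑.N_zero θ]
    | succ k ih =>
      have h1 := N_tri (hu (n+(k+1))) (hu (n+k)) (hu n)
      have h2 := h (n+k)
      have h3 : B * q ^ (n+k) + B * q ^ n * (1 - q ^ k) / (1 - q)
        = B * q ^ n * (1 - q ^ (k+1)) / (1 - q) := by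
        field_simp
        ring
      rw [← h3]
      have : n + (k+1) = n + k + 1 := by ring
      rw [this] at h1 ⊢
      linarith
  have key2 : ∀ n k, 𝓑.N θ (u (n+k) - u n) ≤ B / (1 - q) * q ^ n := by
    intro n k
    refine (key n k).trans ?_
    rw [div_mul_eq_mul_div]
    refine div_le_div_of_nonneg_right ?_ hq'.le
    have h0 : 0 ≤ q ^ k := pow_nonneg hq k
    have h1 : 0 ≤ B * q ^ n := by positivity
    nlinarith
  have ht : Tendsto (fun n => B / (1 - q) * q ^ n) atTop (𝓝 0) := by
    simpa using (tendsto_pow_atTop_nhds_zero_of_lt_one hq hq1).const_mul (B / (1 - q))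
  obtain ⟨x, hx, hx'⟩ := 𝓑.complete θ u hu (by
    intro ε hε
    have ht' := (ht.eventually (gt_mem_nhds (half_pos hε))).exists
    obtain ⟨M, hM⟩ := ht'
    refine ⟨M, fun m hm n hn => ?_⟩
    obtain ⟨k, rfl⟩ := Nat.exists_eq_add_of_le hm
    obtain ⟨l, rfl⟩ := Nat.exists_eq_add_of_le hn
    have h1 := key2 M k
    have h2 := key2 M l
    have h3 := N_tri (hu (M+k)) (hu M) (hu (M+l))
    rw [N_sub_comm θ (u M)] at h3
    linarith)
  have hl : Lim 𝓑 θ u x := by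
    rw [Lim, Metric.tendsto_atTop]
    intro ε hε
    obtain ⟨M, hM⟩ := hx' ε hε
    refine ⟨M, fun n hn => ?_⟩
    rw [Real.dist_eq, sub_zero, abs_of_nonneg (𝓑.N_nonneg _ _)]
    exact hM n hn
  refine ⟨x, hx, hl, hl.bound hu hx (hu 0) fun n => ?_⟩
  simpa using key2 0 n

end RE

namespace RE

open Set Filter Topology

lemma bern {a b κ : ℝ} (hb : 0 ≤ b) (hba : b ≤ a) (ha : 0 < a) (hκ : 0 < κ) (hκ1 : κ ≤ 1) :
    a ^ (κ - 1) * (a - b) ≤ (1 / κ) * (a ^ κ - b ^ κ) := by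
  have h1 := rpow_one_add_le_one_add_mul_self (s := b / a - 1)
    (by have : 0 ≤ b / a := by positivity
        linarith) hκ.le hκ1
  rw [add_sub_cancel, Real.div_rpow hb ha.le] at h1
  have hak : 0 < a ^ κ := Real.rpow_pos_of_pos ha κ
  rw [Real.rpow_sub_one ha.ne']
  rw [div_le_iff₀ hak] at h1
  have h2 : a ^ κ / a * (a - b) = a ^ κ * (1 - b / a) := by field_simp
  rw [h2, div_mul_eq_mul_div, one_mul, le_div_iff₀ hκ]
  nlinarith

lemma sum_pow_le {κ β : ℝ} (hκ : 0 < κ) (hκ1 : κ ≤ 1) (hβ : 1 - β ≤ κ) (N : ℕ) :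
    ∑ i ∈ Finset.range N, ((N:ℝ) - i) ^ (-β) ≤ (1 / κ) * (N:ℝ) ^ κ := by
  have h1 : ∀ i ∈ Finset.range N, ((N:ℝ) - i) ^ (-β)
      ≤ (1/κ) * (((N:ℝ) - i) ^ κ - ((N:ℝ) - (i + 1 : ℕ)) ^ κ) := by
    intro i hi
    have hi' : i + 1 ≤ N := Finset.mem_range.1 hi
    have hi2 : (i:ℝ) + 1 ≤ N := by exact_mod_cast hi'
    have h2 := bern (a := (N:ℝ) - i) (b := (N:ℝ) - (i+1:ℕ)) (κ := κ) (by push_cast; linarith)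
      (by push_cast; linarith) (by linarith) hκ hκ1
    refine le_trans ?_ h2
    have e : (N:ℝ) - i - ((N:ℝ) - (i+1:ℕ)) = 1 := by push_cast; ring
    rw [e, mul_one]
    exact Real.rpow_le_rpow_of_exponent_le (by linarith) (by linarith)
  refine (Finset.sum_le_sum h1).trans ?_
  rw [← Finset.mul_sum, Finset.sum_range_sub' (fun i : ℕ => ((N:ℝ) - i) ^ κ)]
  simp [Real.zero_rpow hκ.ne']

/-- uniform partition points -/
noncomputable def up (s t : ℝ) (N i : ℕ) : ℝ := s + i * ((t - s) / N)

/-- sum over the uniform partition -/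
noncomputable def usum {E : Type} [AddCommGroup E] (Ξ : ℝ → ℝ → E) (s t : ℝ) (N : ℕ) : E :=
  ∑ i ∈ Finset.range N, Ξ (up s t N i) (up s t N (i+1))

lemma up_lt {s t : ℝ} (hst : s < t) {N : ℕ} (hN : 0 < N) (i : ℕ) :
    up s t N i < up s t N (i+1) := by
  have : 0 < (t - s) / N := div_pos (by linarith) (by exact_mod_cast hN)
  unfold up; push_cast; linarith

lemma le_up {s t : ℝ} (hst : s < t) (N i : ℕ) : s ≤ up s t N i := by
  have : 0 ≤ (t - s) / N := div_nonneg (by linarith) (by positivity)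
  unfold up
  have : 0 ≤ (i:ℝ) * ((t - s) / N) := by positivity
  linarith

lemma up_last {s t : ℝ} {N : ℕ} (hN : 0 < N) : up s t N N = t := by
  unfold up
  have : (N:ℝ) ≠ 0 := by positivity
  field_simp; ring

lemma up_zero {s t : ℝ} {N : ℕ} : up s t N 0 = s := by
  unfold up; simp

lemma up_le {s t : ℝ} (hst : s < t) {N i : ℕ} (hN : 0 < N) (hi : i ≤ N) : up s t N i ≤ t := by
  have h : 0 ≤ (t - s) / N := div_nonneg (by linarith) (by positivity)
  have hi' : (i:ℝ) ≤ N := by exact_mod_cast hi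
  calc up s t N i ≤ up s t N N := by
        unfold up
        have := mul_le_mul_of_nonneg_right hi' h
        linarith
    _ = t := up_last hN

lemma sum_double {E : Type} [AddCommGroup E] (f : ℕ → E) (N : ℕ) :
    ∑ i ∈ Finset.range (2 * N), f i = ∑ i ∈ Finset.range N, (f (2*i) + f (2*i+1)) := by
  induction N with
  | zero => simp
  | succ n ih =>
    rw [Finset.sum_range_succ _ n, ← ih, show 2 * (n+1) = 2*n+1+1 by ring,
      Finset.sum_range_succ, Finset.sum_range_succ]
    abel

lemma sewing (ζ β : ℝ) (hζ : 1 < ζ) (hβ0 : 0 ≤ β) (hβ : β < ζ) :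
    ∃ C > (0:ℝ), ∀ (𝓑 : BanachScale) (θ : ℝ) (Ξ : ℝ → ℝ → 𝓑.E) (s t A : ℝ), s < t → 0 ≤ A →
      (∀ u v, s ≤ u → u < v → v ≤ t → 𝓑.Mem θ (Ξ u v)) →
      (∀ u m v, s ≤ u → u < m → m < v → v ≤ t →
        𝓑.N θ (Ξ u v - Ξ u m - Ξ m v) ≤ A * (v - u) ^ ζ * (t - m) ^ (-β)) →
      ∃ W, 𝓑.Mem θ W ∧ Lim 𝓑 θ (fun n => usum Ξ s t (2 ^ n)) W ∧
        𝓑.N θ (W - Ξ s t) ≤ C * A * (t - s) ^ (ζ - β) := by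
  obtain ⟨κ, hκ0, hκ1, hκβ, hκζ⟩ : ∃ κ : ℝ, 0 < κ ∧ κ ≤ 1 ∧ 1 - β ≤ κ ∧ κ < ζ - β := by
    refine ⟨max (1 - β) (min 1 ((ζ - β)/2)), ?_, ?_, le_max_left _ _, ?_⟩
    · exact lt_max_of_lt_right (lt_min one_pos (by linarith))
    · exact max_le (by linarith) (min_le_left _ _)
    · exact max_lt (by linarith) (lt_of_le_of_lt (min_le_right _ _) (by linarith))
  set q : ℝ := (2:ℝ) ^ (-(ζ - β - κ)) with hq
  have hq0 : 0 < q := Real.rpow_pos_of_pos two_pos _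
  have hq1 : q < 1 := Real.rpow_lt_one_of_one_lt_of_neg one_lt_two (by linarith)
  have h2β : 0 < (2:ℝ) ^ β := Real.rpow_pos_of_pos two_pos _
  refine ⟨2 ^ β / κ / (1 - q), by have : 0 < 1 - q := by linarith
                                  positivity, ?_⟩
  intro 𝓑 θ Ξ s t A hst hA hmem hδ
  have hL : 0 < t - s := by linarith
  have hmemsum : ∀ n, 𝓑.Mem θ (usum Ξ s t (2 ^ n)) := by
    intro n
    refine mem_sum _ fun i hi => hmem _ _ (le_up hst _ _) (up_lt hst (by positivity) i)
      (up_le hst (by positivity) hi)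
  have hLp : 0 < (t - s) ^ (ζ - β) := Real.rpow_pos_of_pos hL _
  obtain ⟨W, hW, hlim, hb⟩ := geom_lim (𝓑 := 𝓑) (θ := θ)
    (B := 2 ^ β / κ * A * (t - s) ^ (ζ - β)) (q := q)
    (u := fun n => usum Ξ s t (2 ^ n)) (by positivity) hq0.le hq1 hmemsum (by
    intro n
    set N : ℕ := 2 ^ n with hN
    have hN0 : 0 < N := by positivity
    have hN0' : (0:ℝ) < N := by exact_mod_cast hN0
    set h : ℝ := (t - s) / N with hh
    have hh0 : 0 < h := by positivity
    have hodd : ∀ i, up s t (2 * N) (2*i+1) = up s t N i + h / 2 := by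
      intro i; unfold up; rw [hh]; push_cast; field_simp
      ring
    have heven : ∀ i, up s t (2 * N) (2*i) = up s t N i := by
      intro i; unfold up; push_cast; field_simp
    have hsucc : ∀ i, up s t N (i+1) = up s t N i + h := by
      intro i; unfold up; rw [hh]; push_cast; ring
    have e1 : usum Ξ s t (2 ^ (n+1)) - usum Ξ s t N
        = - ∑ i ∈ Finset.range N, (Ξ (up s t N i) (up s t N i + h)
          - Ξ (up s t N i) (up s t N i + h/2) - Ξ (up s t N i + h/2) (up s t N i + h)) := by
      rw [pow_succ', ← hN]
      unfold usum
      rw [sum_double, ← Finset.sum_sub_distrib, ← Finset.sum_neg_distrib]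
      refine Finset.sum_congr rfl fun i _ => ?_
      rw [show 2*i+1+1 = 2*(i+1) by ring, heven, heven, hodd, hsucc]
      abel
    have hi1 : ∀ i < N, up s t N i + h ≤ t := fun i hi => by
      rw [← hsucc]; exact up_le hst hN0 hi
    change 𝓑.N θ (usum Ξ s t (2 ^ (n+1)) - usum Ξ s t N) ≤ _
    rw [e1, N_neg]
    refine (N_sum N fun i hi => ?_).trans ?_
    · have h1 := le_up hst N i
      have h2 := hi1 i hi
      exact mem_sub (mem_sub (hmem _ _ h1 (by linarith) h2) (hmem _ _ h1 (by linarith)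
        (by linarith))) (hmem _ _ (by linarith) (by linarith) h2)
    have hterm : ∀ i ∈ Finset.range N, 𝓑.N θ (Ξ (up s t N i) (up s t N i + h)
          - Ξ (up s t N i) (up s t N i + h/2) - Ξ (up s t N i + h/2) (up s t N i + h))
        ≤ (A * h ^ ζ * (h ^ (-β) * 2 ^ β)) * ((N:ℝ) - i) ^ (-β) := by
      intro i hi
      have hi' : i + 1 ≤ N := Finset.mem_range.1 hi
      have hi2 : (i:ℝ) + 1 ≤ N := by exact_mod_cast hi'
      refine (hδ _ _ _ (le_up hst N i) (by linarith) (by linarith) (hi1 i hi')).trans ?_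
      have e2 : t - (up s t N i + h/2) = h * ((N:ℝ) - i - 1/2) := by
        have : t - s = N * h := by rw [hh]; field_simp
        unfold up
        rw [← hh]
        linarith
      rw [e2, add_sub_cancel_left]
      have e3 : h ^ (-β) * 2 ^ β * ((N:ℝ) - i) ^ (-β) = (h * (((N:ℝ) - i) / 2)) ^ (-β) := by
        rw [Real.mul_rpow hh0.le (by linarith), Real.div_rpow (by linarith) two_pos.le,
          Real.rpow_neg two_pos.le β]
        field_simp
      rw [mul_assoc (A * h ^ ζ), e3]
      have : 0 ≤ A * h ^ ζ := by positivity
      refine mul_le_mul_of_nonneg_left ?_ this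
      refine Real.rpow_le_rpow_of_nonpos ?_ ?_ (by linarith)
      · have : 0 < (N:ℝ) - i := by linarith
        positivity
      · exact mul_le_mul_of_nonneg_left (by linarith) hh0.le
    refine (Finset.sum_le_sum hterm).trans ?_
    rw [← Finset.mul_sum]
    have h3 := sum_pow_le hκ0 hκ1 hκβ N
    have : 0 ≤ A * h ^ ζ * (h ^ (-β) * 2 ^ β) := by positivity
    refine (mul_le_mul_of_nonneg_left h3 this).trans (le_of_eq ?_)
    have e4 : h ^ ζ * h ^ (-β) = (t - s) ^ (ζ - β) * (N:ℝ) ^ (-(ζ - β)) := by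
      rw [← Real.rpow_add hh0, hh, Real.div_rpow hL.le hN0'.le, Real.rpow_neg hN0'.le,
        ← sub_eq_add_neg]
      field_simp
    have e5 : q ^ n = (N:ℝ) ^ (-(ζ - β)) * (N:ℝ) ^ κ := by
      rw [← Real.rpow_add hN0', hq, hN]
      push_cast
      rw [← Real.rpow_natCast, ← Real.rpow_natCast, ← Real.rpow_mul two_pos.le,
        ← Real.rpow_mul two_pos.le]
      congr 1
      ring
    rw [e5]
    calc A * h ^ ζ * (h ^ (-β) * 2 ^ β) * (1 / κ * (N:ℝ) ^ κ)
        = A * (h ^ ζ * h ^ (-β)) * 2 ^ β * (1 / κ * (N:ℝ) ^ κ) := by ring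
      _ = _ := by rw [e4]; ring)
  refine ⟨W, hW, hlim, ?_⟩
  have e0 : usum Ξ s t (2 ^ 0) = Ξ s t := by
    simp [usum, up]
  simp only [e0] at hb
  refine hb.trans (le_of_eq ?_)
  ring

variable {𝓑 : BanachScale}

lemma smooth1 (Sg : ScaleSemigroup 𝓑) {a b Tm : ℝ} (hab : a ≤ b) (hb : b ≤ a + 1) (hT : 0 < Tm) :
    ∃ C > (0:ℝ), ∀ (t : ℝ) (x : 𝓑.E), 0 < t → t ≤ Tm → 𝓑.Mem a x →
      𝓑.Mem b (Sg.S t x) ∧ 𝓑.N b (Sg.S t x) ≤ C * t ^ (-(b - a)) * 𝓑.N a x := by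
  have := Sg.S_smoothing a (b - a) Tm (by linarith) (by linarith) hT
  rwa [add_sub_cancel] at this

lemma smooth (Sg : ScaleSemigroup 𝓑) {a b Tm : ℝ} (hab : a ≤ b) (hb : b ≤ a + 2) (hT : 0 < Tm) :
    ∃ C > (0:ℝ), ∀ (t : ℝ) (x : 𝓑.E), 0 < t → t ≤ Tm → 𝓑.Mem a x →
      𝓑.Mem b (Sg.S t x) ∧ 𝓑.N b (Sg.S t x) ≤ C * t ^ (-(b - a)) * 𝓑.N a x := by
  set c := (a + b) / 2 with hc
  obtain ⟨C1, hC1, h1⟩ := smooth1 Sg (a := a) (b := c) (by linarith) (by linarith) hT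
  obtain ⟨C2, hC2, h2⟩ := smooth1 Sg (a := c) (b := b) (by linarith) (by linarith) hT
  refine ⟨C2 * C1 * (2:ℝ)⁻¹ ^ (-(b - a)), by positivity, fun t x ht htT hx => ?_⟩
  obtain ⟨m1, n1⟩ := h1 (t/2) x (by linarith) (by linarith) hx
  obtain ⟨m2, n2⟩ := h2 (t/2) _ (by linarith) (by linarith) m1
  have e : Sg.S t x = Sg.S (t/2) (Sg.S (t/2) x) := by
    rw [← Sg.S_comp _ _ (by linarith) (by linarith), add_halves]
  rw [e]
  refine ⟨m2, n2.trans ?_⟩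
  have e1 : C2 * C1 * (2:ℝ)⁻¹ ^ (-(b - a)) * t ^ (-(b - a)) * 𝓑.N a x
    = C2 * (t/2) ^ (-(b - c)) * (C1 * (t/2) ^ (-(c - a)) * 𝓑.N a x) := by
    have : (t/2) ^ (-(b - c)) * (t/2) ^ (-(c - a)) = (2:ℝ)⁻¹ ^ (-(b - a)) * t ^ (-(b - a)) := by
      rw [← Real.rpow_add (by linarith), ← Real.mul_rpow (by positivity) ht.le]
      congr 1
      · ring
      · ring
    calc _ = C2 * C1 * ((2:ℝ)⁻¹ ^ (-(b - a)) * t ^ (-(b - a))) * 𝓑.N a x := by ring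
      _ = _ := by rw [← this]; ring
  rw [e1]
  exact mul_le_mul_of_nonneg_left n1 (by positivity)

lemma holdId (Sg : ScaleSemigroup 𝓑) {a b Tm : ℝ} (hab : a ≤ b) (hb : b ≤ a + 1) (hT : 0 < Tm) :
    ∃ C > (0:ℝ), ∀ (t : ℝ) (x : 𝓑.E), 0 < t → t ≤ Tm → 𝓑.Mem b x →
      𝓑.N a (Sg.S t x - x) ≤ C * t ^ (b - a) * 𝓑.N b x := by
  have := Sg.S_holdId a (b - a) Tm (by linarith) (by linarith) hT
  rwa [add_sub_cancel] at this

end RE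

namespace RE

open Set Filter Topology

variable {𝓑 : BanachScale}

lemma seg_deriv {a b : ℝ} (f : 𝓑.E → 𝓑.E) (L : 𝓑.E → 𝓑.E →ₗ[ℝ] 𝓑.E)
    (hder : ∀ x, 𝓑.Mem a x → ∀ ε > (0:ℝ), ∃ δ > (0:ℝ), ∀ h, 𝓑.Mem a h → 𝓑.N a h < δ →
      𝓑.N b (f (x + h) - f x - L x h) ≤ ε * 𝓑.N a h) {z h : 𝓑.E} (hz : 𝓑.Mem a z)
    (hh : 𝓑.Mem a h) (r : ℝ) (ε : ℝ) (hε : 0 < ε) : ∃ δ > (0:ℝ), ∀ q : ℝ, |q - r| < δ →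
      𝓑.N b (f (z + q • h) - f (z + r • h) - (q - r) • L (z + r • h) h) ≤ ε * |q - r| := by
  have hn : 0 ≤ 𝓑.N a h := 𝓑.N_nonneg _ _
  have hn1 : 0 < 𝓑.N a h + 1 := by linarith
  obtain ⟨d, hd, H⟩ := hder (z + r • h) (𝓑.mem_add _ _ _ hz (𝓑.mem_smul _ _ _ hh))
    (ε / (𝓑.N a h + 1)) (by positivity)
  refine ⟨d / (𝓑.N a h + 1), by positivity, fun q hq => ?_⟩
  rw [lt_div_iff₀ hn1] at hq
  have h1 := H ((q - r) • h) (𝓑.mem_smul _ _ _ hh) (by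
    rw [𝓑.N_smul]
    nlinarith [abs_nonneg (q - r)])
  have e : z + r • h + (q - r) • h = z + q • h := by
    rw [sub_smul]; abel
  rw [e, map_smul, 𝓑.N_smul] at h1
  refine h1.trans ?_
  rw [div_mul_eq_mul_div, div_le_iff₀ hn1]
  have : 0 ≤ ε * |q - r| := by positivity
  nlinarith

lemma lip_of_deriv {a b C : ℝ} (hC : 0 ≤ C) (f : 𝓑.E → 𝓑.E) (L : 𝓑.E → 𝓑.E →ₗ[ℝ] 𝓑.E)
    (hf : ∀ x, 𝓑.Mem a x → 𝓑.Mem b (f x))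
    (hL : ∀ x h, 𝓑.Mem a x → 𝓑.Mem a h → 𝓑.Mem b (L x h))
    (hLb : ∀ x h, 𝓑.Mem a x → 𝓑.Mem a h → 𝓑.N b (L x h) ≤ C * 𝓑.N a h)
    (hder : ∀ x, 𝓑.Mem a x → ∀ ε > (0:ℝ), ∃ δ > (0:ℝ), ∀ h, 𝓑.Mem a h → 𝓑.N a h < δ →
      𝓑.N b (f (x + h) - f x - L x h) ≤ ε * 𝓑.N a h) (x z : 𝓑.E) (hx : 𝓑.Mem a x)
    (hz : 𝓑.Mem a z) : 𝓑.N b (f x - f z) ≤ C * 𝓑.N a (x - z) := by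
  have hh := mem_sub hx hz
  have hm : ∀ r : ℝ, 𝓑.Mem a (z + r • (x - z)) := fun r =>
    𝓑.mem_add _ _ _ hz (𝓑.mem_smul _ _ _ hh)
  have := mvt (θ := b) (C := C * 𝓑.N a (x - z)) (fun r => f (z + r • (x - z)))
    (fun r => L (z + r • (x - z)) (x - z)) (fun r _ _ => hf _ (hm r))
    (fun r _ _ => hL _ _ (hm r) hh)
    (fun r _ _ ε hε => by
      obtain ⟨d, hd, H⟩ := seg_deriv f L hder hz hh r ε hε
      exact ⟨d, hd, fun q _ _ hq => H q hq⟩)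
    (fun r _ _ => hLb _ _ (hm r) hh)
  simpa using this

/-- quantitative consequences of assumption (G) -/
structure GC (𝓑 : BanachScale) (α σ γ : ℝ) (G : 𝓑.E → 𝓑.E)
    (DG : 𝓑.E → 𝓑.E →ₗ[ℝ] 𝓑.E) (C : ℝ) : Prop where
  pos : 0 < C
  mG : ∀ x, 𝓑.Mem γ x → 𝓑.Mem (γ - σ) (G x)
  mG1 : ∀ x, 𝓑.Mem (γ - α) x → 𝓑.Mem (γ - 2 * α) (G x)
  mD : ∀ x, 𝓑.Mem γ x → 𝓑.Mem (γ - α - σ) (DG x (G x))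
  bG : ∀ x, 𝓑.Mem γ x → 𝓑.N (γ - σ) (G x) ≤ C * (1 + 𝓑.N γ x)
  bGa : ∀ x, 𝓑.Mem γ x → 𝓑.N (γ - α) (G x) ≤ C * (1 + 𝓑.N γ x)
  lipG : ∀ x z, 𝓑.Mem (γ - α) x → 𝓑.Mem (γ - α) z →
    𝓑.N (γ - 2 * α) (G x - G z) ≤ C * 𝓑.N (γ - α) (x - z)
  bD : ∀ x, 𝓑.Mem γ x → 𝓑.N (γ - α - σ) (DG x (G x)) ≤ C * (1 + 𝓑.N γ x)
  lipD : ∀ x z, 𝓑.Mem (γ - α) x → 𝓑.Mem (γ - α) z →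
    𝓑.N (γ - 2 * α - σ) (DG x (G x) - DG z (G z)) ≤ C * 𝓑.N (γ - α) (x - z)
  rem : ∀ x z, 𝓑.Mem γ x → 𝓑.Mem γ z → ∀ ξ : ℝ,
    𝓑.N (γ - 2 * α - σ) (G x - G z - ξ • DG z (G z)) ≤
      C * (𝓑.N (γ - 2 * α) (x - z - ξ • G z) + |ξ| * 𝓑.N (γ - α) (x - z))

lemma exists_GC {α σ γ : ℝ} (hα : 0 < α) (hσ : 0 ≤ σ) (hσα : σ < α) {G : 𝓑.E → 𝓑.E}
    {DG : 𝓑.E → 𝓑.E →ₗ[ℝ] 𝓑.E} {D2G : 𝓑.E → 𝓑.E →ₗ[ℝ] 𝓑.E →ₗ[ℝ] 𝓑.E}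
    {D3G : 𝓑.E → 𝓑.E →ₗ[ℝ] 𝓑.E →ₗ[ℝ] 𝓑.E →ₗ[ℝ] 𝓑.E}
    (hG : AssumptionG 𝓑 α σ γ G DG D2G D3G) : ∃ C, GC 𝓑 α σ γ G DG C := by
  have t0 : (0:ℝ) ∈ ({0, α, 2 * α} : Set ℝ) := by simp
  have t1 : α ∈ ({0, α, 2 * α} : Set ℝ) := by simp
  have t2 : 2 * α ∈ ({0, α, 2 * α} : Set ℝ) := by simp
  have m0 := hG.maps 0 t0
  have m1 := hG.maps α t1
  have dm0 := hG.DG_maps 0 t0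
  have dm1 := hG.DG_maps α t1
  have dm2 := hG.DG_maps _ t2
  have db : ∀ θ ∈ ({0, α, 2 * α} : Set ℝ), ∃ C > (0:ℝ), ∀ x h : 𝓑.E, 𝓑.Mem (γ - θ) x →
    𝓑.Mem (γ - θ) h → 𝓑.N (γ - θ - σ) (DG x h) ≤ C * 𝓑.N (γ - θ) h := by
    intro θ hθ
    obtain ⟨C, hC⟩ := hG.DG_bound θ hθ
    refine ⟨max C 1, lt_max_of_lt_right one_pos, fun x h hx hh => (hC x h hx hh).trans ?_⟩
    exact mul_le_mul_of_nonneg_right (le_max_left _ _) (𝓑.N_nonneg _ _)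
  obtain ⟨c0, hc0, db0⟩ := db 0 t0
  obtain ⟨c1, hc1, db1⟩ := db α t1
  obtain ⟨c2, hc2, db2⟩ := db _ t2
  have der0 := hG.DG_isDeriv 0 t0
  have der1 := hG.DG_isDeriv α t1
  have der2 := hG.DG_isDeriv _ t2
  have lip0 := lip_of_deriv hc0.le G DG m0 dm0 db0 der0
  have lip1 := lip_of_deriv hc1.le G DG m1 dm1 db1 der1
  rw [sub_zero] at m0 lip0
  have mono : ∀ {a b : ℝ} {x : 𝓑.E}, a ≤ b → 𝓑.Mem b x → 𝓑.Mem a x :=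
    fun h hx => 𝓑.mem_mono h _ hx
  have mG1 : ∀ x, 𝓑.Mem (γ - α) x → 𝓑.Mem (γ - 2 * α) (G x) := fun x hx =>
    mono (by linarith) (m1 x hx)
  have mDD : ∀ x, 𝓑.Mem (γ - α) x → 𝓑.Mem (γ - 2 * α - σ) (DG x (G x)) := fun x hx =>
    dm2 x _ (mono (by linarith) hx) (mG1 x hx)
  obtain ⟨L, c3', hL1, hL2⟩ := hG.DGG_deriv_bounded
  obtain ⟨c3, hc3, hL1'⟩ : ∃ c3 > (0:ℝ), ∀ x h : 𝓑.E, 𝓑.Mem (γ - α) x → 𝓑.Mem (γ - α) h →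
      𝓑.N (γ - 2 * α - σ) (L x h) ≤ c3 * 𝓑.N (γ - α) h := by
    refine ⟨max c3' 1, lt_max_of_lt_right one_pos, fun x h hx hh => ((hL1 x h hx hh).2).trans ?_⟩
    exact mul_le_mul_of_nonneg_right (le_max_left _ _) (𝓑.N_nonneg _ _)
  have lipD := lip_of_deriv hc3.le (fun x => DG x (G x)) L mDD (fun x h hx hh => (hL1 x h hx hh).1)
    hL1' hL2
  obtain ⟨e1, he1, emb1⟩ := 𝓑.embed_bound (show γ - 2 * α ≤ γ - α - σ by linarith)
  obtain ⟨e2, he2, emb2⟩ := 𝓑.embed_bound (show γ - α ≤ γ - σ by linarith)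
  -- linear growth of G
  set g0 := 𝓑.N (γ - σ) (G 0) with hg0
  have hg0' : 0 ≤ g0 := 𝓑.N_nonneg _ _
  have bG : ∀ x, 𝓑.Mem γ x → 𝓑.N (γ - σ) (G x) ≤ (c0 + g0) * (1 + 𝓑.N γ x) := by
    intro x hx
    have h1 := lip0 x 0 hx (𝓑.mem_zero _)
    rw [sub_zero] at h1
    have h2 := N_le_sub_add (m0 x hx) (m0 0 (𝓑.mem_zero _))
    have := 𝓑.N_nonneg γ x
    nlinarith
  have mGa : ∀ x, 𝓑.Mem γ x → 𝓑.Mem (γ - α) (G x) := fun x hx => mono (by linarith) (m0 x hx)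
  have bGa : ∀ x, 𝓑.Mem γ x → 𝓑.N (γ - α) (G x) ≤ (e2 * (c0 + g0)) * (1 + 𝓑.N γ x) := by
    intro x hx
    refine (emb2 _ (m0 x hx)).trans ?_
    rw [mul_assoc]
    exact mul_le_mul_of_nonneg_left (bG x hx) he2.le
  have lipG : ∀ x z, 𝓑.Mem (γ - α) x → 𝓑.Mem (γ - α) z →
      𝓑.N (γ - 2 * α) (G x - G z) ≤ (e1 * c1) * 𝓑.N (γ - α) (x - z) := by
    intro x z hx hz
    refine (emb1 _ (mem_sub (m1 x hx) (m1 z hz))).trans ?_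
    rw [mul_assoc]
    exact mul_le_mul_of_nonneg_left (lip1 x z hx hz) he1.le
  have mga : ∀ x, 𝓑.Mem γ x → 𝓑.Mem (γ - α) x := fun x hx => mono (by linarith) hx
  have bD : ∀ x, 𝓑.Mem γ x → 𝓑.N (γ - α - σ) (DG x (G x))
      ≤ (c1 * (e2 * (c0 + g0))) * (1 + 𝓑.N γ x) := by
    intro x hx
    refine (db1 x _ (mga x hx) (mGa x hx)).trans ?_
    rw [mul_assoc]
    exact mul_le_mul_of_nonneg_left (bGa x hx) hc1.le
  have rem : ∀ x z, 𝓑.Mem γ x → 𝓑.Mem γ z → ∀ ξ : ℝ,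
      𝓑.N (γ - 2 * α - σ) (G x - G z - ξ • DG z (G z)) ≤
      (c2 + c3 + c2 * (e1 * c1)) *
        (𝓑.N (γ - 2 * α) (x - z - ξ • G z) + |ξ| * 𝓑.N (γ - α) (x - z)) := by
    intro x z hx hz ξ
    have hh := mem_sub (mga x hx) (mga z hz)
    have hh2 : 𝓑.Mem (γ - 2 * α) (x - z) := mono (by linarith) hh
    have hz2 : 𝓑.Mem (γ - 2 * α) z := mono (by linarith) hz
    have hm : ∀ r : ℝ, 𝓑.Mem (γ - α) (z + r • (x - z)) := fun r =>
      𝓑.mem_add _ _ _ (mga z hz) (𝓑.mem_smul _ _ _ hh)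
    have hm2 : ∀ r : ℝ, 𝓑.Mem (γ - 2 * α) (z + r • (x - z)) := fun r =>
      mono (by linarith) (hm r)
    have hR : 𝓑.Mem (γ - 2 * α) (x - z - ξ • G z) :=
      mem_sub hh2 (𝓑.mem_smul _ _ _ (mG1 z (mga z hz)))
    have hc : 𝓑.Mem (γ - 2 * α - σ) (ξ • DG z (G z)) := 𝓑.mem_smul _ _ _ (mDD z (mga z hz))
    have nR := 𝓑.N_nonneg (γ - 2 * α) (x - z - ξ • G z)
    have nh := 𝓑.N_nonneg (γ - α) (x - z)
    have := mvt (θ := γ - 2 * α - σ) (C := (c2 + c3 + c2 * (e1 * c1)) *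
        (𝓑.N (γ - 2 * α) (x - z - ξ • G z) + |ξ| * 𝓑.N (γ - α) (x - z)))
      (fun r => G (z + r • (x - z)) - r • (ξ • DG z (G z)))
      (fun r => DG (z + r • (x - z)) (x - z) - ξ • DG z (G z))
      (fun r _ _ => mem_sub (mono (by linarith) (m1 _ (hm r))) (𝓑.mem_smul _ _ _ hc))
      (fun r _ _ => mem_sub (dm2 _ _ (hm2 r) hh2) hc)
      (fun r _ _ ε hε => by
        obtain ⟨d, hd, H⟩ := seg_deriv G DG der2 hz2 hh2 r ε hε
        refine ⟨d, hd, fun q _ _ hq => ?_⟩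
        have h1 := H q hq
        have e : G (z + q • (x - z)) - q • (ξ • DG z (G z))
            - (G (z + r • (x - z)) - r • (ξ • DG z (G z)))
            - (q - r) • (DG (z + r • (x - z)) (x - z) - ξ • DG z (G z))
          = G (z + q • (x - z)) - G (z + r • (x - z))
            - (q - r) • DG (z + r • (x - z)) (x - z) := by
          module
        rw [e]; exact h1)
      (fun r hr0 hr1 => by
        set w := z + r • (x - z) with hw
        have e : DG w (x - z) - ξ • DG z (G z) = DG w (x - z - ξ • G z)
            + ξ • ((DG w (G w) - DG z (G z)) - DG w (G w - G z)) := by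
          simp only [map_sub, map_smul, smul_sub]
          abel
        rw [e]
        have ewz : w - z = r • (x - z) := by rw [hw]; abel
        have nwz : 𝓑.N (γ - α) (w - z) ≤ 𝓑.N (γ - α) (x - z) := by
          rw [ewz, 𝓑.N_smul, abs_of_nonneg hr0]
          nlinarith
        have k1 := db2 w _ (hm2 r) hR
        have k2 := lipD w z (hm r) (mga z hz)
        have mGG := mem_sub (mG1 w (hm r)) (mG1 z (mga z hz))
        have k3 := db2 w _ (hm2 r) mGG
        have k4 := lipG w z (hm r) (mga z hz)
        have k5 : c2 * 𝓑.N (γ - 2 * α) (G w - G z) ≤ c2 * (e1 * c1 * 𝓑.N (γ - α) (x - z)) :=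
          mul_le_mul_of_nonneg_left (k4.trans (mul_le_mul_of_nonneg_left nwz (by positivity))) hc2.le
        have k6 := mul_le_mul_of_nonneg_left nwz hc3.le
        have mA := mem_sub (mDD w (hm r)) (mDD z (mga z hz))
        have mB := dm2 w _ (hm2 r) mGG
        have k7 := 𝓑.N_add _ _ _ (dm2 w _ (hm2 r) hR) (𝓑.mem_smul _ ξ _ (mem_sub mA mB))
        have k8 := N_sub_le mA mB
        rw [𝓑.N_smul] at k7
        have k9 : 𝓑.N (γ - 2 * α - σ) ((DG w (G w) - DG z (G z)) - DG w (G w - G z))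
            ≤ (c3 + c2 * (e1 * c1)) * 𝓑.N (γ - α) (x - z) := by
          linarith
        have k10 := mul_le_mul_of_nonneg_left k9 (abs_nonneg ξ)
        have p1 : 0 ≤ (c3 + c2 * (e1 * c1)) * 𝓑.N (γ - 2 * α) (x - z - ξ • G z) := by positivity
        have p2 : 0 ≤ c2 * (|ξ| * 𝓑.N (γ - α) (x - z)) := by positivity
        linarith)
    have e : G x - G z - ξ • DG z (G z) = (G (z + (1:ℝ) • (x - z)) - (1:ℝ) • (ξ • DG z (G z)))
        - (G (z + (0:ℝ) • (x - z)) - (0:ℝ) • (ξ • DG z (G z))) := by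
      simp only [one_smul, zero_smul, add_sub_cancel, add_zero, sub_zero]
      abel
    rw [e]
    exact this
  have P1 : 0 < c0 + g0 := by linarith
  have P2 : 0 < e2 * (c0 + g0) := by positivity
  have P3 : 0 < e1 * c1 := by positivity
  have P4 : 0 < c1 * (e2 * (c0 + g0)) := by positivity
  have P5 : 0 < c2 + c3 + c2 * (e1 * c1) := by positivity
  have n1 : ∀ x, 0 ≤ 1 + 𝓑.N γ x := fun x => by
    have := 𝓑.N_nonneg γ x
    linarith
  refine ⟨(c0 + g0) + e2 * (c0 + g0) + e1 * c1 + c1 * (e2 * (c0 + g0)) + c3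
    + (c2 + c3 + c2 * (e1 * c1)), ?_⟩
  exact
    { pos := by linarith
      mG := m0
      mG1 := mG1
      mD := fun x hx => dm1 x _ (mga x hx) (mGa x hx)
      bG := fun x hx => (bG x hx).trans (mul_le_mul_of_nonneg_right (by linarith) (n1 x))
      bGa := fun x hx => (bGa x hx).trans (mul_le_mul_of_nonneg_right (by linarith) (n1 x))
      lipG := fun x z hx hz => (lipG x z hx hz).trans
        (mul_le_mul_of_nonneg_right (by linarith) (𝓑.N_nonneg _ _))
      bD := fun x hx => (bD x hx).trans (mul_le_mul_of_nonneg_right (by linarith) (n1 x))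
      lipD := fun x z hx hz => (lipD x z hx hz).trans
        (mul_le_mul_of_nonneg_right (by linarith) (𝓑.N_nonneg _ _))
      rem := fun x z hx hz ξ => (rem x z hx hz ξ).trans
        (mul_le_mul_of_nonneg_right (by linarith) (by
          have := 𝓑.N_nonneg (γ - 2 * α) (x - z - ξ • G z)
          have := 𝓑.N_nonneg (γ - α) (x - z)
          positivity)) }

end RE

namespace RE

open Set Filter Topology

variable {𝓑 : BanachScale}

/-- summand of the rough convolution -/
noncomputable def Xi (Sg : ScaleSemigroup 𝓑) (X : ℝ → ℝ) (X2 : ℝ → ℝ → ℝ) (g g' : ℝ → 𝓑.E)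
    (t u v : ℝ) : 𝓑.E :=
  Sg.S (t - u) ((X v - X u) • g u + X2 u v • g' u)

/-- summand of the drift -/
noncomputable def Dr (Sg : ScaleSemigroup 𝓑) (f : ℝ → 𝓑.E) (t u v : ℝ) : 𝓑.E :=
  (v - u) • Sg.S (t - u) (f u)

/-- quantitative path data -/
structure PD (𝓑 : BanachScale) (α γ T : ℝ) (X : ℝ → ℝ) (G : 𝓑.E → 𝓑.E) (y : ℝ → 𝓑.E)
    (K : ℝ) : Prop where
  pos : 0 ≤ K
  mem : ∀ t, 0 ≤ t → t ≤ T → 𝓑.Mem γ (y t)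
  bd : ∀ t, 0 ≤ t → t ≤ T → 𝓑.N γ (y t) ≤ K
  inc : ∀ s t, 0 ≤ s → s < t → t ≤ T → 𝓑.N (γ - α) (y t - y s) ≤ K * (t - s) ^ α
  rem : ∀ s t, 0 ≤ s → s < t → t ≤ T →
    𝓑.N (γ - 2 * α) (y t - y s - (X t - X s) • G (y s)) ≤ K * (t - s) ^ (2 * α)

/-- quantitative rough path data -/
structure XD (α Tm : ℝ) (X : ℝ → ℝ) (X2 : ℝ → ℝ → ℝ) (c : ℝ) : Prop where
  pos : 0 < c
  h1 : ∀ s t : ℝ, 0 ≤ s → s ≤ t → t ≤ Tm → |X t - X s| ≤ c * (t - s) ^ α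
  h2 : ∀ s t : ℝ, 0 ≤ s → s ≤ t → t ≤ Tm → |X2 s t| ≤ c * (t - s) ^ (2 * α)
  chen : ∀ s u t : ℝ, 0 ≤ s → s ≤ u → u ≤ t → t ≤ Tm →
    X2 s t - X2 s u - X2 u t = (X u - X s) * (X t - X u)

lemma exists_XD {α Tm : ℝ} (RP : RoughPath α Tm) : ∃ c, XD α Tm RP.X RP.X2 c := by
  obtain ⟨c1, h1⟩ := RP.holderX
  obtain ⟨c2, h2⟩ := RP.holderX2
  refine ⟨max (max c1 c2) 1, lt_max_of_lt_right one_pos, ?_, ?_, RP.chen⟩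
  · intro s t hs hst ht
    refine (h1 s t hs hst ht).trans (mul_le_mul_of_nonneg_right ?_
      (Real.rpow_nonneg (by linarith) _))
    exact (le_max_left _ _).trans (le_max_left _ _)
  · intro s t hs hst ht
    refine (h2 s t hs hst ht).trans (mul_le_mul_of_nonneg_right ?_
      (Real.rpow_nonneg (by linarith) _))
    exact (le_max_right _ _).trans (le_max_left _ _)

lemma delta_bound {α σ γ Tm C c : ℝ} (hα : 0 < α) (hα' : α < 1/2) (hσ : 0 ≤ σ)
    (hTm : 0 < Tm) (Sg : ScaleSemigroup 𝓑) {G : 𝓑.E → 𝓑.E}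
    {DG : 𝓑.E → 𝓑.E →ₗ[ℝ] 𝓑.E} (hG : GC 𝓑 α σ γ G DG C) (hσα : σ < α) {X : ℝ → ℝ}
    {X2 : ℝ → ℝ → ℝ} (hX : XD α Tm X X2 c) :
    ∃ Cd > (0:ℝ), ∀ (T K : ℝ) (y : ℝ → 𝓑.E), T ≤ Tm → PD 𝓑 α γ T X G y K →
      ∀ u m v, 0 ≤ u → u < m → m < v → v ≤ T → ∃ w, 𝓑.Mem (γ - 2 * α - σ) w ∧
        𝓑.N (γ - 2 * α - σ) w ≤ Cd * (1 + K) * (v - u) ^ (3 * α) ∧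
        ∀ t, m ≤ t →
          Xi Sg X X2 (fun s => G (y s)) (fun s => DG (y s) (G (y s))) t u v
          - Xi Sg X X2 (fun s => G (y s)) (fun s => DG (y s) (G (y s))) t u m
          - Xi Sg X X2 (fun s => G (y s)) (fun s => DG (y s) (G (y s))) t m v
          = Sg.S (t - m) w := by
  obtain ⟨H1, hH1, b1⟩ := holdId Sg (a := γ - 2 * α - σ) (b := γ - σ) (by linarith)
    (by linarith) hTm
  obtain ⟨H2, hH2, b2⟩ := holdId Sg (a := γ - 2 * α - σ) (b := γ - α - σ) (by linarith)
    (by linarith) hTm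
  have hC := hG.pos
  have hc := hX.pos
  refine ⟨c * H1 * C + 2 * c * H2 * C + c * C * (1 + c) + c * C, by positivity, ?_⟩
  intro T K y hT P u m v hu hum hmv hv
  have hK := P.pos
  have hyu := P.mem u hu (by linarith)
  have hym := P.mem m (by linarith) (by linarith)
  have mono : ∀ {a b : ℝ} {x : 𝓑.E}, a ≤ b → 𝓑.Mem b x → 𝓑.Mem a x :=
    fun h hx => 𝓑.mem_mono h _ hx
  set g : ℝ → 𝓑.E := fun s => G (y s) with hg
  set g' : ℝ → 𝓑.E := fun s => DG (y s) (G (y s)) with hg'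
  have mgu : 𝓑.Mem (γ - σ) (g u) := hG.mG _ hyu
  have mgm : 𝓑.Mem (γ - σ) (g m) := hG.mG _ hym
  have mgu' : 𝓑.Mem (γ - α - σ) (g' u) := hG.mD _ hyu
  have mgm' : 𝓑.Mem (γ - α - σ) (g' m) := hG.mD _ hym
  have lgu : 𝓑.Mem (γ - 2 * α - σ) (g u) := mono (by linarith) mgu
  have lgm : 𝓑.Mem (γ - 2 * α - σ) (g m) := mono (by linarith) mgm
  have lgu' : 𝓑.Mem (γ - 2 * α - σ) (g' u) := mono (by linarith) mgu'
  have lgm' : 𝓑.Mem (γ - 2 * α - σ) (g' m) := mono (by linarith) mgm'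
  have hmu : 0 ≤ m - u := by linarith
  set A := Sg.S (m - u) (g u) - g u with hA
  set A' := Sg.S (m - u) (g' u) - g' u with hA'
  set R := g m - g u - (X m - X u) • g' u with hR
  set Q := g' m - g' u with hQ
  have mA : 𝓑.Mem (γ - 2 * α - σ) A := mem_sub (Sg.S_mem _ _ _ hmu lgu) lgu
  have mA' : 𝓑.Mem (γ - 2 * α - σ) A' := mem_sub (Sg.S_mem _ _ _ hmu lgu') lgu'
  have mR : 𝓑.Mem (γ - 2 * α - σ) R := mem_sub (mem_sub lgm lgu) (𝓑.mem_smul _ _ _ lgu')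
  have mQ : 𝓑.Mem (γ - 2 * α - σ) Q := mem_sub lgm' lgu'
  set d := (v - u) ^ α with hd
  have hd0 : 0 ≤ d := Real.rpow_nonneg (by linarith) _
  have d2 : (v - u) ^ (2 * α) = d ^ 2 := by
    rw [hd, ← Real.rpow_natCast, ← Real.rpow_mul (by linarith)]; congr 1; push_cast; ring
  have d3 : (v - u) ^ (3 * α) = d ^ 3 := by
    rw [hd, ← Real.rpow_natCast, ← Real.rpow_mul (by linarith)]; congr 1; push_cast; ring
  have p1 : ∀ x, 0 ≤ x → x ≤ v - u → x ^ α ≤ d := fun x h1 h2 =>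
    Real.rpow_le_rpow h1 h2 hα.le
  have p2 : ∀ x, 0 ≤ x → x ≤ v - u → x ^ (2 * α) ≤ d ^ 2 := fun x h1 h2 => by
    rw [← d2]; exact Real.rpow_le_rpow h1 h2 (by linarith)
  -- norm bounds
  have bdu := P.bd u hu (by linarith)
  have nA : 𝓑.N (γ - 2 * α - σ) A ≤ H1 * d ^ 2 * (C * (1 + K)) := by
    have h1 := b1 (m - u) (g u) (by linarith) (by linarith) mgu
    rw [show γ - σ - (γ - 2 * α - σ) = 2 * α by ring] at h1
    have h2 := p2 (m - u) hmu (by linarith)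
    have h3 : 𝓑.N (γ - σ) (g u) ≤ C * (1 + K) := (hG.bG _ hyu).trans
      (mul_le_mul_of_nonneg_left (by linarith) hC.le)
    refine h1.trans (mul_le_mul (mul_le_mul_of_nonneg_left h2 hH1.le) h3 (𝓑.N_nonneg _ _)
      (by positivity))
  have nA' : 𝓑.N (γ - 2 * α - σ) A' ≤ H2 * d * (C * (1 + K)) := by
    have h1 := b2 (m - u) (g' u) (by linarith) (by linarith) mgu'
    rw [show γ - α - σ - (γ - 2 * α - σ) = α by ring] at h1
    have h2 := p1 (m - u) hmu (by linarith)
    have h3 : 𝓑.N (γ - α - σ) (g' u) ≤ C * (1 + K) := (hG.bD _ hyu).trans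
      (mul_le_mul_of_nonneg_left (by linarith) hC.le)
    refine h1.trans (mul_le_mul (mul_le_mul_of_nonneg_left h2 hH2.le) h3 (𝓑.N_nonneg _ _)
      (by positivity))
  have xum : |X m - X u| ≤ c * d := (hX.h1 u m hu hum.le (by linarith)).trans
    (mul_le_mul_of_nonneg_left (p1 _ hmu (by linarith)) hc.le)
  have xmv : |X v - X m| ≤ c * d := (hX.h1 m v (by linarith) hmv.le (by linarith)).trans
    (mul_le_mul_of_nonneg_left (p1 _ (by linarith) (by linarith)) hc.le)
  have x2um : |X2 u m| ≤ c * d ^ 2 := (hX.h2 u m hu hum.le (by linarith)).trans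
    (mul_le_mul_of_nonneg_left (p2 _ hmu (by linarith)) hc.le)
  have x2mv : |X2 m v| ≤ c * d ^ 2 := (hX.h2 m v (by linarith) hmv.le (by linarith)).trans
    (mul_le_mul_of_nonneg_left (p2 _ (by linarith) (by linarith)) hc.le)
  have x2uv : |X2 u v| ≤ c * d ^ 2 := (hX.h2 u v hu (by linarith) (by linarith)).trans
    (mul_le_mul_of_nonneg_left (p2 _ (by linarith) (by linarith)) hc.le)
  have x2d : |X2 u v - X2 u m| ≤ 2 * (c * d ^ 2) := by
    have := abs_sub (X2 u v) (X2 u m)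
    linarith
  have ninc : 𝓑.N (γ - α) (y m - y u) ≤ K * d := (P.inc u m hu hum (by linarith)).trans
    (mul_le_mul_of_nonneg_left (p1 _ hmu (by linarith)) hK)
  have nrem := (P.rem u m hu hum (by linarith)).trans
    (mul_le_mul_of_nonneg_left (p2 _ hmu (by linarith)) hK)
  have nR : 𝓑.N (γ - 2 * α - σ) R ≤ C * (K * d ^ 2 + (c * d) * (K * d)) := by
    refine (hG.rem (y m) (y u) hym hyu (X m - X u)).trans ?_
    refine mul_le_mul_of_nonneg_left ?_ hC.le
    refine add_le_add nrem (mul_le_mul xum ninc (𝓑.N_nonneg _ _) (by positivity))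
  have nQ : 𝓑.N (γ - 2 * α - σ) Q ≤ C * (K * d) := by
    refine (hG.lipD (y m) (y u) (mono (by linarith) hym) (mono (by linarith) hyu)).trans ?_
    exact mul_le_mul_of_nonneg_left ninc hC.le
  refine ⟨((X v - X m) • A + (X2 u v - X2 u m) • A') - ((X v - X m) • R + X2 m v • Q),
    mem_sub (𝓑.mem_add _ _ _ (𝓑.mem_smul _ _ _ mA) (𝓑.mem_smul _ _ _ mA'))
      (𝓑.mem_add _ _ _ (𝓑.mem_smul _ _ _ mR) (𝓑.mem_smul _ _ _ mQ)), ?_, ?_⟩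
  · rw [d3]
    refine (N_sub_le (𝓑.mem_add _ _ _ (𝓑.mem_smul _ _ _ mA) (𝓑.mem_smul _ _ _ mA'))
      (𝓑.mem_add _ _ _ (𝓑.mem_smul _ _ _ mR) (𝓑.mem_smul _ _ _ mQ))).trans ?_
    have k1 := 𝓑.N_add _ _ _ (𝓑.mem_smul _ (X v - X m) _ mA)
      (𝓑.mem_smul _ (X2 u v - X2 u m) _ mA')
    have k2 := 𝓑.N_add _ _ _ (𝓑.mem_smul _ (X v - X m) _ mR) (𝓑.mem_smul _ (X2 m v) _ mQ)
    rw [𝓑.N_smul, 𝓑.N_smul] at k1 k2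
    have l1 := mul_le_mul xmv nA (𝓑.N_nonneg _ _) (by positivity)
    have l2 := mul_le_mul x2d nA' (𝓑.N_nonneg _ _) (by positivity)
    have l3 := mul_le_mul xmv nR (𝓑.N_nonneg _ _) (by positivity)
    have l4 := mul_le_mul x2mv nQ (𝓑.N_nonneg _ _) (by positivity)
    have l5 : 0 ≤ (c * C * (1 + c) + c * C) * d ^ 3 := by positivity
    linarith
  · intro t ht
    unfold Xi
    have e1 : ∀ x, Sg.S (t - u) x = Sg.S (t - m) (Sg.S (m - u) x) := fun x => by
      rw [← Sg.S_comp _ _ (by linarith) hmu]; congr 2; ring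
    have ch := hX.chen u m v hu hum.le hmv.le (by linarith)
    have ch' : X2 u v = X2 u m + X2 m v + (X m - X u) * (X v - X m) := by linarith
    rw [e1, e1, ← map_sub, ← map_sub]
    congr 1
    rw [hA, hA', hR, hQ, ch']
    simp only [map_add, map_smul]
    module

lemma rough_bound {α σ γ Tm C c θ : ℝ} (hα : 1/3 < α) (hα' : α < 1/2) (hσ : 0 ≤ σ)
    (hTm : 0 < Tm) (Sg : ScaleSemigroup 𝓑) {G : 𝓑.E → 𝓑.E}
    {DG : 𝓑.E → 𝓑.E →ₗ[ℝ] 𝓑.E} (hG : GC 𝓑 α σ γ G DG C) (hσα : σ < α) {X : ℝ → ℝ}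
    {X2 : ℝ → ℝ → ℝ} (hX : XD α Tm X X2 c) (hθ : 0 ≤ θ) (hθ2 : θ ≤ 2 * α) :
    ∃ Cd > (0:ℝ), ∀ (T K : ℝ) (y : ℝ → 𝓑.E), T ≤ Tm → PD 𝓑 α γ T X G y K →
      ∀ s t, 0 ≤ s → s < t → t ≤ T →
        (∀ u v, s ≤ u → u < v → v ≤ t → 𝓑.Mem (γ - θ)
          (Xi Sg X X2 (fun s => G (y s)) (fun s => DG (y s) (G (y s))) t u v)) ∧
        ∃ W, 𝓑.Mem (γ - θ) W ∧
        Lim 𝓑 (γ - θ) (fun n => usum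
          (Xi Sg X X2 (fun s => G (y s)) (fun s => DG (y s) (G (y s))) t) s t (2 ^ n)) W ∧
        𝓑.N (γ - θ) (W - Xi Sg X X2 (fun s => G (y s)) (fun s => DG (y s) (G (y s))) t s t)
          ≤ Cd * (1 + K) * (t - s) ^ (α - σ + θ) := by
  obtain ⟨Cd, hCd, hd⟩ := delta_bound (by linarith) hα' hσ hTm Sg hG hσα hX
  obtain ⟨Cs, hCs, hs⟩ := smooth Sg (a := γ - 2 * α - σ) (b := γ - θ) (by linarith)
    (by linarith) hTm
  obtain ⟨Cw, hCw, hw⟩ := sewing (3 * α) (2 * α + σ - θ) (by linarith) (by linarith) (by linarith)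
  refine ⟨Cw * (Cs * Cd), by positivity, ?_⟩
  intro T K y hT P s t hs0 hst ht
  have hK := P.pos
  have mono : ∀ {a b : ℝ} {x : 𝓑.E}, a ≤ b → 𝓑.Mem b x → 𝓑.Mem a x :=
    fun h hx => 𝓑.mem_mono h _ hx
  have hm : ∀ u v, s ≤ u → u < v → v ≤ t → 𝓑.Mem (γ - θ)
          (Xi Sg X X2 (fun s => G (y s)) (fun s => DG (y s) (G (y s))) t u v) := by
    intro u v hu huv hv
    have hyu := P.mem u (by linarith) (by linarith)
    refine (hs (t - u) _ (by linarith) (by linarith) ?_).1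
    exact 𝓑.mem_add _ _ _ (𝓑.mem_smul _ _ _ (mono (by linarith) (hG.mG _ hyu)))
      (𝓑.mem_smul _ _ _ (mono (by linarith) (hG.mD _ hyu)))
  refine ⟨hm, ?_⟩
  obtain ⟨W, h1, h2, h3⟩ := hw 𝓑 (γ - θ)
    (Xi Sg X X2 (fun s => G (y s)) (fun s => DG (y s) (G (y s))) t) s t (Cs * Cd * (1 + K)) hst
    (by positivity) hm (by
      intro u m v hu hum hmv hv
      obtain ⟨w, mw, nw, ew⟩ := hd T K y hT P u m v (by linarith) hum hmv (by linarith)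
      rw [ew t (by linarith)]
      have h4 := (hs (t - m) w (by linarith) (by linarith) mw).2
      rw [show γ - θ - (γ - 2 * α - σ) = 2 * α + σ - θ by ring] at h4
      have h5 : 0 ≤ (t - m) ^ (-(2 * α + σ - θ)) := Real.rpow_nonneg (by linarith) _
      have h6 := mul_le_mul_of_nonneg_left nw (by positivity :
        0 ≤ Cs * (t - m) ^ (-(2 * α + σ - θ)))
      linarith)
  refine ⟨W, h1, h2, h3.trans (le_of_eq ?_)⟩
  rw [show 3 * α - (2 * α + σ - θ) = α - σ + θ by ring]
  ring

lemma drift_bound {γ δ θ ρ Tm : ℝ} (hθ : 0 ≤ θ) (hρ : 0 ≤ ρ) (hρ1 : ρ < 1) (hδ : δ ≤ θ + ρ)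
    (hTm : 0 < Tm) (Sg : ScaleSemigroup 𝓑) {F : 𝓑.E → 𝓑.E} (hF : AssumptionF 𝓑 γ δ F) :
    ∃ C > (0:ℝ), ∀ (T M : ℝ) (y : ℝ → 𝓑.E), T ≤ Tm → 0 ≤ M →
      (∀ t, 0 ≤ t → t ≤ T → 𝓑.Mem γ (y t)) → (∀ t, 0 ≤ t → t ≤ T → 𝓑.N γ (y t) ≤ M) →
      ∀ s t, 0 ≤ s → s < t → t ≤ T →
        (∀ u v, s ≤ u → u < v → v ≤ t →
          𝓑.Mem (γ - θ) (Dr Sg (fun s => F (y s)) t u v)) ∧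
        ∀ N : ℕ, 0 < N → 𝓑.N (γ - θ) (usum (Dr Sg (fun s => F (y s)) t) s t N)
          ≤ C * (1 + M) * (t - s) ^ (1 - ρ) := by
  obtain ⟨Cs, hCs, hs⟩ := smooth Sg (a := γ - θ - ρ) (b := γ - θ) (by linarith)
    (by linarith) hTm
  obtain ⟨e, he, emb⟩ := 𝓑.embed_bound (show γ - θ - ρ ≤ γ - δ by linarith)
  obtain ⟨cF', hcF'⟩ := hF.linGrowth
  obtain ⟨cF, hcF, hFb⟩ : ∃ cF > (0:ℝ), ∀ x, 𝓑.Mem γ x →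
      𝓑.N (γ - δ) (F x) ≤ cF * (1 + 𝓑.N γ x) := by
    refine ⟨max cF' 1, lt_max_of_lt_right one_pos, fun x hx => (hcF' x hx).trans ?_⟩
    have := 𝓑.N_nonneg γ x
    exact mul_le_mul_of_nonneg_right (le_max_left _ _) (by linarith)
  have hρ' : 0 < 1 - ρ := by linarith
  refine ⟨Cs * e * cF * (1 / (1 - ρ)), by positivity, ?_⟩
  intro T M y hT hM hmem hbd s t hs0 hst ht
  have mF : ∀ u, s ≤ u → u < t → 𝓑.Mem (γ - θ - ρ) (F (y u)) := fun u h1 h2 =>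
    𝓑.mem_mono (by linarith) _ (hF.maps _ (hmem u (by linarith) (by linarith)))
  have hm : ∀ u v, s ≤ u → u < v → v ≤ t →
          𝓑.Mem (γ - θ) (Dr Sg (fun s => F (y s)) t u v) := by
    intro u v hu huv hv
    exact 𝓑.mem_smul _ _ _ (hs (t - u) _ (by linarith) (by linarith)
      (mF u hu (by linarith))).1
  refine ⟨hm, fun N hN => ?_⟩
  have hterm : ∀ u v, s ≤ u → u < v → v ≤ t →
      𝓑.N (γ - θ) (Dr Sg (fun s => F (y s)) t u v)
        ≤ Cs * e * cF * (1 / (1 - ρ)) * (1 + M) * ((t - u) ^ (1 - ρ) - (t - v) ^ (1 - ρ)) := by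
    intro u v hu huv hv
    unfold Dr
    rw [𝓑.N_smul, abs_of_pos (by linarith)]
    have h1 := (hs (t - u) _ (by linarith) (by linarith) (mF u hu (by linarith))).2
    rw [show γ - θ - (γ - θ - ρ) = ρ by ring] at h1
    have hyu := hmem u (by linarith) (by linarith)
    have h2 := emb _ (hF.maps _ hyu)
    have h3 := hFb _ hyu
    have h4 := hbd u (by linarith) (by linarith)
    have h5 : 𝓑.N (γ - θ - ρ) (F (y u)) ≤ e * (cF * (1 + M)) :=
      h2.trans (mul_le_mul_of_nonneg_left (h3.trans
        (mul_le_mul_of_nonneg_left (by linarith) hcF.le)) he.le)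
    have h6 : 0 ≤ (t - u) ^ (-ρ) := Real.rpow_nonneg (by linarith) _
    have h7 := h1.trans (mul_le_mul_of_nonneg_left h5 (by positivity))
    have h8 := bern (a := t - u) (b := t - v) (κ := 1 - ρ) (by linarith) (by linarith)
      (by linarith) hρ' (by linarith)
    rw [show 1 - ρ - 1 = -ρ by ring, show t - u - (t - v) = v - u by ring] at h8
    have h9 := mul_le_mul_of_nonneg_left h7 (by linarith : 0 ≤ v - u)
    refine h9.trans ?_
    have h10 := mul_le_mul_of_nonneg_left h8 (by positivity : 0 ≤ Cs * e * cF * (1 + M))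
    linarith
  refine (N_sum N fun i hi => hm _ _ (le_up hst N i) (up_lt hst hN i) (up_le hst hN hi)).trans ?_
  refine (Finset.sum_le_sum fun i hi => hterm _ _ (le_up hst N i) (up_lt hst hN i)
    (up_le hst hN (Finset.mem_range.1 hi))).trans ?_
  rw [← Finset.mul_sum, Finset.sum_range_sub' (fun i => (t - up s t N i) ^ (1 - ρ)),
    up_last hN, up_zero, sub_self, Real.zero_rpow hρ'.ne', sub_zero]

end RE

namespace RE

open Set Filter Topology

variable {𝓑 : BanachScale}

/-- Riemann-type convergence along partitions -/
def RS (𝓑 : BanachScale) (θ : ℝ) (Φ : ℝ → ℝ → 𝓑.E) (a b : ℝ) (I : 𝓑.E) : Prop :=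
  ∀ ε > (0:ℝ), ∃ δ > (0:ℝ), ∀ π : RPartition a b, π.mesh < δ →
    𝓑.N θ (∑ i ∈ Finset.range π.n, Φ (π.t i) (π.t (i + 1)) - I) ≤ ε

lemma RS.lim {θ a b L : ℝ} {Φ : ℝ → ℝ → 𝓑.E} {I : 𝓑.E} (h : RS 𝓑 θ Φ a b I)
    (π : ℕ → RPartition a b)
    (hπ : ∀ n, ∀ i < (π n).n, (π n).t (i + 1) - (π n).t i ≤ L / 2 ^ n) (hL : 0 ≤ L) :
    Lim 𝓑 θ (fun n => ∑ i ∈ Finset.range (π n).n, Φ ((π n).t i) ((π n).t (i + 1))) I := by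
  rw [Lim, Metric.tendsto_atTop]
  intro ε hε
  obtain ⟨d, hd, H⟩ := h (ε / 2) (by linarith)
  have ht : Tendsto (fun n : ℕ => L / 2 ^ n) atTop (𝓝 0) := by
    have := (tendsto_pow_atTop_nhds_zero_of_lt_one (r := (1/2:ℝ)) (by norm_num)
      (by norm_num)).const_mul L
    simpa [div_eq_mul_inv] using this
  obtain ⟨M, hM⟩ := Filter.eventually_atTop.1 (ht.eventually (gt_mem_nhds hd))
  refine ⟨M, fun n hn => ?_⟩
  rw [Real.dist_eq, sub_zero, abs_of_nonneg (𝓑.N_nonneg _ _)]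
  refine lt_of_le_of_lt (H (π n) ?_) (by linarith)
  refine lt_of_le_of_lt ?_ (hM n hn)
  refine Real.sSup_le ?_ (by positivity)
  rintro r ⟨i, hi, rfl⟩
  exact hπ n i hi

lemma up_step (s t : ℝ) (N i : ℕ) : up s t N (i+1) - up s t N i = (t - s) / N := by
  unfold up; push_cast; ring

/-- uniform partition -/
noncomputable def upart {s t : ℝ} (hst : s < t) (N : ℕ) (hN : 0 < N) : RPartition s t where
  n := N
  t := up s t N
  n_pos := hN
  strict := fun i _ => up_lt hst hN i
  first := up_zero
  last := up_last hN

/-- points of the concatenated uniform partition -/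
noncomputable def cp (s t : ℝ) (N i : ℕ) : ℝ := if i ≤ N then up 0 s N i else up s t N (i - N)

lemma cp_lo {s t : ℝ} {N i : ℕ} (h : i ≤ N) : cp s t N i = up 0 s N i := by
  simp [cp, h]

lemma cp_hi {s t : ℝ} {N : ℕ} (hN : 0 < N) (i : ℕ) : cp s t N (N + i) = up s t N i := by
  rcases Nat.eq_zero_or_pos i with rfl | hi
  · rw [add_zero, cp_lo le_rfl, up_last hN, up_zero]
  · have : ¬ (N + i ≤ N) := by omega
    simp [cp, this]

lemma cp_cases {N : ℕ} {i : ℕ} (P : ℕ → Prop) (h1 : ∀ i < N, P i) (h2 : ∀ i, P (N + i)) :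
    P i := by
  rcases lt_or_ge i N with h | h
  · exact h1 i h
  · obtain ⟨k, rfl⟩ := Nat.exists_eq_add_of_le h
    exact h2 k

lemma cp_lt {s t : ℝ} (hs : 0 < s) (hst : s < t) {N : ℕ} (hN : 0 < N) (i : ℕ) :
    cp s t N i < cp s t N (i+1) := by
  refine cp_cases (N := N) (fun i => cp s t N i < cp s t N (i+1)) ?_ ?_
  · intro i hi
    rw [cp_lo hi.le, cp_lo hi]
    exact up_lt hs hN i
  · intro i
    rw [add_assoc, cp_hi hN, cp_hi hN]
    exact up_lt hst hN i

/-- concatenated uniform partition -/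
noncomputable def cpart {s t : ℝ} (hs : 0 < s) (hst : s < t) (N : ℕ) (hN : 0 < N) :
    RPartition 0 t where
  n := N + N
  t := cp s t N
  n_pos := by omega
  strict := fun i _ => cp_lt hs hst hN i
  first := by rw [cp_lo (Nat.zero_le _), up_zero]
  last := by rw [cp_hi hN, up_last hN]

lemma cp_sum {E : Type} [AddCommGroup E] (Φ : ℝ → ℝ → E) {s t : ℝ} {N : ℕ} (hN : 0 < N) :
    ∑ i ∈ Finset.range (N + N), Φ (cp s t N i) (cp s t N (i+1))
      = usum Φ 0 s N + usum Φ s t N := by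
  rw [Finset.sum_range_add]
  unfold usum
  congr 1
  · refine Finset.sum_congr rfl fun i hi => ?_
    have hi' := Finset.mem_range.1 hi
    rw [cp_lo hi'.le, cp_lo hi']
  · refine Finset.sum_congr rfl fun i hi => ?_
    rw [add_assoc, cp_hi hN, cp_hi hN]

lemma RS.lim_zero {θ a b : ℝ} (hab : a < b) {Φ : ℝ → ℝ → 𝓑.E} {I : 𝓑.E}
    (h : RS 𝓑 θ Φ a b I) : Lim 𝓑 θ (fun n => usum Φ a b (2 ^ n)) I := by
  refine h.lim (L := b - a) (fun n => upart hab (2 ^ n) (by positivity)) ?_ (by linarith)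
  intro n i hi
  change up a b (2^n) (i+1) - up a b (2^n) i ≤ _
  rw [up_step]
  push_cast
  exact le_rfl

lemma RS.lim_pos {θ s t : ℝ} (Sg : ScaleSemigroup 𝓑) (hs : 0 < s) (hst : s < t)
    {Φs Φt : ℝ → ℝ → 𝓑.E} {Is It : 𝓑.E}
    (ms : 𝓑.Mem θ Is) (mt : 𝓑.Mem θ It) (h : RS 𝓑 θ Φs 0 s Is) (h' : RS 𝓑 θ Φt 0 t It)
    (hΦ : ∀ u v, 0 ≤ u → u < v → v ≤ s → Φt u v = Sg.S (t - s) (Φs u v))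
    (mem1 : ∀ u v, 0 ≤ u → u < v → v ≤ s → 𝓑.Mem θ (Φs u v))
    (mem2 : ∀ u v, 0 ≤ u → u < v → v ≤ t → 𝓑.Mem θ (Φt u v)) :
    𝓑.Mem θ (It - Sg.S (t - s) Is) ∧
    Lim 𝓑 θ (fun n => usum Φt s t (2 ^ n)) (It - Sg.S (t - s) Is) := by
  have hp : ∀ n : ℕ, 0 < 2 ^ n := fun n => by positivity
  have l1 := h.lim_zero hs
  have l2 := h'.lim (L := t) (fun n => cpart hs hst (2 ^ n) (by positivity)) (by
    intro n i hi
    change cp s t (2^n) (i+1) - cp s t (2^n) i ≤ _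
    refine cp_cases (N := 2 ^ n) (fun i => cp s t (2^n) (i+1) - cp s t (2^n) i ≤ t / 2 ^ n) ?_ ?_
    · intro i hi
      rw [cp_lo hi.le, cp_lo hi, up_step]
      push_cast
      gcongr
      linarith
    · intro i
      rw [add_assoc, cp_hi (hp n), cp_hi (hp n), up_step]
      push_cast
      gcongr
      linarith) (by linarith)
  have hts : 0 ≤ t - s := by linarith
  have mS : 𝓑.Mem θ (Sg.S (t - s) Is) := Sg.S_mem _ _ _ hts ms
  have mU : ∀ n : ℕ, 𝓑.Mem θ (usum Φs 0 s (2 ^ n)) := fun n =>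
    mem_sum _ fun i hi => mem1 _ _ (le_up hs _ _) (up_lt hs (hp n) i) (up_le hs (hp n) hi)
  have mV : ∀ n : ℕ, 𝓑.Mem θ (usum Φt s t (2 ^ n)) := fun n =>
    mem_sum _ fun i hi => mem2 _ _ (hs.le.trans (le_up hst _ _)) (up_lt hst (hp n) i)
      (up_le hst (hp n) hi)
  have mSU : ∀ n : ℕ, 𝓑.Mem θ (Sg.S (t - s) (usum Φs 0 s (2 ^ n))) := fun n =>
    Sg.S_mem _ _ _ hts (mU n)
  refine ⟨mem_sub mt mS, ?_⟩
  have eU : ∀ n : ℕ, usum Φt 0 s (2 ^ n) = Sg.S (t - s) (usum Φs 0 s (2 ^ n)) := by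
    intro n
    unfold usum
    rw [map_sum]
    refine Finset.sum_congr rfl fun i hi => hΦ _ _ (le_up hs _ _) (up_lt hs (hp n) i)
      (up_le hs (hp n) (Finset.mem_range.1 hi))
  have e2 : (fun n => ∑ i ∈ Finset.range (cpart hs hst (2 ^ n) (hp n)).n,
      Φt ((cpart hs hst (2 ^ n) (hp n)).t i) ((cpart hs hst (2 ^ n) (hp n)).t (i + 1)))
      = fun n => Sg.S (t - s) (usum Φs 0 s (2 ^ n)) + usum Φt s t (2 ^ n) := by
    funext n
    rw [← eU]
    exact cp_sum Φt (hp n)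
  have l2' : Lim 𝓑 θ (fun n => Sg.S (t - s) (usum Φs 0 s (2 ^ n)) + usum Φt s t (2 ^ n)) It := by
    rw [← e2]; exact l2
  obtain ⟨C, hC, bS⟩ := Sg.S_bounded θ (t - s) (by linarith)
  have l3 : Lim 𝓑 θ (fun n => Sg.S (t - s) (usum Φs 0 s (2 ^ n))) (Sg.S (t - s) Is) := by
    have : Tendsto (fun n => C * 𝓑.N θ (usum Φs 0 s (2 ^ n) - Is)) atTop (𝓝 0) := by
      simpa using l1.const_mul C
    refine squeeze_zero (fun n => 𝓑.N_nonneg _ _) (fun n => ?_) this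
    rw [← map_sub]
    exact bS _ _ hts le_rfl (mem_sub (mU n) ms)
  have := Lim.sub (fun n => 𝓑.mem_add _ _ _ (mSU n) (mV n)) mSU mt mS l2' l3
  simpa using this

lemma decomp {α γ T : ℝ} {Sg : ScaleSemigroup 𝓑} {X : ℝ → ℝ} {X2 : ℝ → ℝ → ℝ}
    {F G : 𝓑.E → 𝓑.E} {DG : 𝓑.E → 𝓑.E →ₗ[ℝ] 𝓑.E} {y₀ : 𝓑.E} {y : ℝ → 𝓑.E}
    (h : IsSolution 𝓑 Sg α γ X X2 F G DG y₀ T y)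
    (mX : ∀ t, 0 < t → t ≤ T → ∀ u v, 0 ≤ u → u < v → v ≤ t → 𝓑.Mem (γ - 2 * α)
          (Xi Sg X X2 (fun s => G (y s)) (fun s => DG (y s) (G (y s))) t u v))
    (mD : ∀ t, 0 < t → t ≤ T → ∀ u v, 0 ≤ u → u < v → v ≤ t →
          𝓑.Mem γ (Dr Sg (fun s => F (y s)) t u v))
    {s t : ℝ} (hs : 0 ≤ s) (hst : s < t) (ht : t ≤ T) :
    ∃ D Z : 𝓑.E, 𝓑.Mem γ D ∧ 𝓑.Mem (γ - 2 * α) Z ∧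
      Lim 𝓑 γ (fun n => usum (Dr Sg (fun s => F (y s)) t) s t (2 ^ n)) D ∧
      Lim 𝓑 (γ - 2 * α) (fun n => usum
        (Xi Sg X X2 (fun s => G (y s)) (fun s => DG (y s) (G (y s))) t) s t (2 ^ n)) Z ∧
      y t = Sg.S (t - s) (y s) + D + Z := by
  obtain ⟨Dt, Zt, ⟨mDt, rDt⟩, ⟨mZt, rZt⟩, et⟩ := h.mild t (by linarith) ht
  have RDt : RS 𝓑 γ (Dr Sg (fun s => F (y s)) t) 0 t Dt := rDt
  have RZt : RS 𝓑 (γ - 2 * α) (Xi Sg X X2 (fun s => G (y s)) (fun s => DG (y s) (G (y s))) t)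
    0 t Zt := rZt
  rcases hs.eq_or_lt with rfl | hs0
  · refine ⟨Dt, Zt, mDt, mZt, RDt.lim_zero hst, RZt.lim_zero hst, ?_⟩
    rw [sub_zero, h.init]
    exact et
  · obtain ⟨Ds, Zs, ⟨mDs, rDs⟩, ⟨mZs, rZs⟩, es⟩ := h.mild s hs0 (by linarith)
    have RDs : RS 𝓑 γ (Dr Sg (fun s => F (y s)) s) 0 s Ds := rDs
    have RZs : RS 𝓑 (γ - 2 * α) (Xi Sg X X2 (fun s => G (y s)) (fun s => DG (y s) (G (y s))) s)
      0 s Zs := rZs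
    have eS : ∀ u, u ≤ s → ∀ x, Sg.S (t - u) x = Sg.S (t - s) (Sg.S (s - u) x) := fun u hu x => by
      rw [← Sg.S_comp _ _ (by linarith) (by linarith)]; congr 2; ring
    obtain ⟨m1, l1⟩ := RS.lim_pos Sg hs0 hst mDs mDt RDs RDt (by
      intro u v hu huv hv
      unfold Dr
      rw [map_smul, eS u (by linarith)]) (mD s hs0 (by linarith)) (mD t (by linarith) ht)
    obtain ⟨m2, l2⟩ := RS.lim_pos Sg hs0 hst mZs mZt RZs RZt (by
      intro u v hu huv hv
      unfold Xi
      rw [eS u (by linarith)]) (mX s hs0 (by linarith)) (mX t (by linarith) ht)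
    refine ⟨_, _, m1, m2, l1, l2, ?_⟩
    have e0 := eS 0 hs y₀
    rw [sub_zero, sub_zero] at e0
    rw [es, et, e0, map_add, map_add]
    abel

end RE

namespace RE

open Set Filter Topology

variable {𝓑 : BanachScale}

lemma pw {x T Tm e η : ℝ} (hx : 0 < x) (hxT : x ≤ T) (hT : T ≤ Tm) (hη : 0 ≤ η) (he : η ≤ e) :
    x ^ e ≤ Tm ^ (e - η) * T ^ η := by
  have h1 : x ^ e = x ^ (e - η) * x ^ η := by
    rw [← Real.rpow_add hx]; congr 1; ring
  rw [h1]
  have h2 : x ^ (e - η) ≤ Tm ^ (e - η) :=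
    Real.rpow_le_rpow hx.le (hxT.trans hT) (by linarith)
  have h3 : x ^ η ≤ T ^ η := Real.rpow_le_rpow hx.le hxT hη
  exact mul_le_mul h2 h3 (Real.rpow_nonneg hx.le _)
    (Real.rpow_nonneg (hx.le.trans (hxT.trans hT)) _)

lemma pieces {α σ γ δ θ ρ Tm C c : ℝ} (hα : 1/3 < α) (hα' : α < 1/2) (hσ : 0 ≤ σ)
    (hδ : 0 ≤ δ) (hδ1 : δ < 1)
    (hTm : 0 < Tm) (Sg : ScaleSemigroup 𝓑) {F G : 𝓑.E → 𝓑.E}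
    {DG : 𝓑.E → 𝓑.E →ₗ[ℝ] 𝓑.E} (hF : AssumptionF 𝓑 γ δ F)
    (hG : GC 𝓑 α σ γ G DG C) (hσα : σ < α) {X : ℝ → ℝ}
    {X2 : ℝ → ℝ → ℝ} (hX : XD α Tm X X2 c) (hθ : 0 ≤ θ) (hθ2 : θ ≤ 2 * α)
    (hρ : 0 ≤ ρ) (hρ1 : ρ < 1) (hδρ : δ ≤ θ + ρ) :
    ∃ Cp > (0:ℝ), ∀ (T K M : ℝ) (y₀ : 𝓑.E) (y : ℝ → 𝓑.E), T ≤ Tm → PD 𝓑 α γ T X G y K →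
      0 ≤ M → (∀ t, 0 ≤ t → t ≤ T → 𝓑.N γ (y t) ≤ M) →
      IsSolution 𝓑 Sg α γ X X2 F G DG y₀ T y →
      ∀ s t, 0 ≤ s → s < t → t ≤ T → ∃ D E : 𝓑.E, 𝓑.Mem (γ - θ) D ∧ 𝓑.Mem (γ - θ) E ∧
        𝓑.Mem (γ - θ) (Xi Sg X X2 (fun s => G (y s)) (fun s => DG (y s) (G (y s))) t s t) ∧
        𝓑.N (γ - θ) D ≤ Cp * (1 + M) * (t - s) ^ (1 - ρ) ∧
        𝓑.N (γ - θ) E ≤ Cp * (1 + K) * (t - s) ^ (α - σ + θ) ∧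
        y t = Sg.S (t - s) (y s) + D
          + (E + Xi Sg X X2 (fun s => G (y s)) (fun s => DG (y s) (G (y s))) t s t) := by
  obtain ⟨C0, hC0, d0⟩ := drift_bound (γ := γ) (δ := δ) (θ := 0) (ρ := δ) le_rfl hδ hδ1
    (by linarith) hTm Sg hF
  obtain ⟨C1, hC1, d1⟩ := drift_bound hθ hρ hρ1 hδρ hTm Sg hF
  obtain ⟨C2, hC2, r2⟩ := rough_bound (θ := 2 * α) hα hα' hσ hTm Sg hG hσα hX (by linarith) le_rfl
  obtain ⟨C3, hC3, r3⟩ := rough_bound hα hα' hσ hTm Sg hG hσα hX hθ hθ2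
  refine ⟨C1 + C3, by positivity, ?_⟩
  intro T K M y₀ y hT P hM bM sol s t hs hst ht
  obtain ⟨D, Z, mD, mZ, lD, lZ, ey⟩ := decomp sol
    (fun t ht0 ht1 u v hu huv hv => (r2 T K y hT P 0 t le_rfl ht0 ht1).1 u v hu huv hv)
    (fun t ht0 ht1 u v hu huv hv => by
      have := (d0 T M y hT hM P.mem bM 0 t le_rfl ht0 ht1).1 u v hu huv hv
      simpa using this) hs hst ht
  obtain ⟨mXi, W, mW, lW, bW⟩ := r3 T K y hT P s t hs hst ht
  obtain ⟨mDr, bDr⟩ := d1 T M y hT hM P.mem bM s t hs hst ht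
  have mDr0 : ∀ u v, s ≤ u → u < v → v ≤ t → 𝓑.Mem γ (Dr Sg (fun s => F (y s)) t u v) := by
    intro u v hu huv hv
    have := (d0 T M y hT hM P.mem bM s t hs hst ht).1 u v hu huv hv
    simpa using this
  have hpow : ∀ n : ℕ, 0 < 2 ^ n := fun n => by positivity
  have musum : ∀ (a : ℝ) (Φ : ℝ → ℝ → 𝓑.E), (∀ u v, s ≤ u → u < v → v ≤ t → 𝓑.Mem a (Φ u v)) →
      ∀ n : ℕ, 𝓑.Mem a (usum Φ s t (2 ^ n)) := by
    intro a Φ h n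
    refine mem_sum _ fun i hi => h _ _ (le_up hst _ _) (up_lt hst (hpow n) i)
      (up_le hst (hpow n) hi)
  have hWZ : W = Z := by
    refine Lim.unique (θ := γ - 2 * α) (fun n => ?_) (𝓑.mem_mono (by linarith) _ mW) mZ
      (Lim.mono (by linarith) (musum _ _ mXi) mW lW) lZ
    exact 𝓑.mem_mono (by linarith) _ (musum _ _ mXi n)
  subst hWZ
  have mD' : 𝓑.Mem (γ - θ) D := 𝓑.mem_mono (by linarith) _ mD
  have lD' := Lim.mono (show γ - θ ≤ γ by linarith) (musum _ _ mDr0) mD lD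
  have bD : 𝓑.N (γ - θ) (D - 0) ≤ C1 * (1 + M) * (t - s) ^ (1 - ρ) := by
    refine Lim.bound (musum _ _ mDr) mD' (𝓑.mem_zero _) lD' fun n => ?_
    rw [sub_zero]
    exact bDr _ (hpow n)
  rw [sub_zero] at bD
  have hXi := mXi s t le_rfl hst le_rfl
  have hK := P.pos
  have p1 : 0 ≤ (t - s) ^ (1 - ρ) := Real.rpow_nonneg (by linarith) _
  have p2 : 0 ≤ (t - s) ^ (α - σ + θ) := Real.rpow_nonneg (by linarith) _
  refine ⟨D, W - Xi Sg X X2 (fun s => G (y s)) (fun s => DG (y s) (G (y s))) t s t, mD',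
    mem_sub mW hXi, hXi, bD.trans ?_, bW.trans ?_, ?_⟩
  · gcongr; linarith
  · gcongr; linarith
  · rw [sub_add_cancel]; exact ey

set_option maxHeartbeats 4000000 in
/-- supremum bound -/
lemma sup_bound {α σ γ δ Tm C c : ℝ} (hα : 1/3 < α) (hα' : α < 1/2) (hσ : 0 ≤ σ)
    (hδ : 0 ≤ δ) (hδ1 : δ < 1)
    (hTm : 0 < Tm) (Sg : ScaleSemigroup 𝓑) {F G : 𝓑.E → 𝓑.E}
    {DG : 𝓑.E → 𝓑.E →ₗ[ℝ] 𝓑.E} (hF : AssumptionF 𝓑 γ δ F)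
    (hG : GC 𝓑 α σ γ G DG C) (hσα : σ < α) {X : ℝ → ℝ}
    {X2 : ℝ → ℝ → ℝ} (hX : XD α Tm X X2 c) :
    ∃ Cp > (0:ℝ), ∀ (T K : ℝ) (y₀ : 𝓑.E) (y : ℝ → 𝓑.E), 0 < T → T ≤ Tm →
      PD 𝓑 α γ T X G y K →
      IsSolution 𝓑 Sg α γ X X2 F G DG y₀ T y →
      ∀ t, 0 ≤ t → t ≤ T →
        𝓑.N γ (y t) ≤ Cp * (1 + 𝓑.N γ y₀ + T ^ min (α - σ) (1 - δ) * K) := by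
  obtain ⟨Cp, hCp, hp⟩ := pieces (θ := 0) (ρ := δ) hα hα' hσ hδ hδ1 hTm Sg hF hG hσα hX le_rfl
    (by linarith) hδ hδ1 (by linarith)
  obtain ⟨Cb, hCb, hb⟩ := Sg.S_bounded γ Tm hTm
  obtain ⟨C1, hC1, s1⟩ := smooth Sg (a := γ - σ) (b := γ) (by linarith) (by linarith) hTm
  obtain ⟨C2, hC2, s2⟩ := smooth Sg (a := γ - α - σ) (b := γ) (by linarith) (by linarith) hTm
  set η := min (α - σ) (1 - δ) with hη
  have hη0 : 0 ≤ η := le_min (by linarith) (by linarith)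
  have hη1 : η ≤ α - σ := min_le_left _ _
  have hη2 : η ≤ 1 - δ := min_le_right _ _
  have hc := hX.pos
  have hC := hG.pos
  set Q1 := Tm ^ (1 - δ - η) with hQ1
  set Q2 := Tm ^ (α - σ - η) with hQ2
  have q1 : 0 < Q1 := Real.rpow_pos_of_pos hTm _
  have q2 : 0 < Q2 := Real.rpow_pos_of_pos hTm _
  set A := Cp * Q1 + Cp * Q2 + C1 * c * C * Q2 + C2 * c * C * Q2 with hA
  have hA0 : 0 < A := by positivity
  have qη : 0 < Tm ^ η := Real.rpow_pos_of_pos hTm _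
  refine ⟨1 + Cb + A + A * Tm ^ η, by positivity, ?_⟩
  intro T K y₀ y hT0 hT P sol t ht0 ht
  have hK := P.pos
  have hN := 𝓑.N_nonneg γ y₀
  have tη : 0 < T ^ η := Real.rpow_pos_of_pos hT0 _
  have tη' : T ^ η ≤ Tm ^ η := Real.rpow_le_rpow hT0.le hT hη0
  have hTK : 0 ≤ T ^ η * K := by positivity
  rcases ht0.eq_or_lt with rfl | htpos
  · rw [sol.init]
    have h0 : 0 ≤ Cb + A + A * Tm ^ η := by positivity
    nlinarith
  obtain ⟨D, E, mD, mE, mXi, bD, bE, ey⟩ := hp T K K y₀ y hT P hK P.bd sol 0 t le_rfl htpos ht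
  rw [sol.init] at ey
  simp only [sub_zero, add_zero] at mD mE mXi bD bE ey
  have m0 : 𝓑.Mem γ y₀ := sol.init ▸ P.mem 0 le_rfl hT0.le
  have mS := Sg.S_mem t γ y₀ ht0 m0
  have hbd0 : 𝓑.N γ y₀ ≤ K := sol.init ▸ P.bd 0 le_rfl hT0.le
  have e1 : t ^ (1 - δ) ≤ Q1 * T ^ η := pw htpos ht hT hη0 hη2
  have e2 : t ^ (α - σ) ≤ Q2 * T ^ η := pw htpos ht hT hη0 hη1
  -- the local term
  have mg : 𝓑.Mem (γ - σ) (G y₀) := hG.mG _ m0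
  have mg' : 𝓑.Mem (γ - α - σ) (DG y₀ (G y₀)) := hG.mD _ m0
  obtain ⟨ms1, bs1⟩ := s1 t (G y₀) htpos (ht.trans hT) mg
  obtain ⟨ms2, bs2⟩ := s2 t (DG y₀ (G y₀)) htpos (ht.trans hT) mg'
  have x1 := hX.h1 0 t le_rfl ht0 (ht.trans hT)
  have x2 := hX.h2 0 t le_rfl ht0 (ht.trans hT)
  rw [sub_zero] at x1 x2
  have bXi : 𝓑.N γ (Xi Sg X X2 (fun s => G (y s)) (fun s => DG (y s) (G (y s))) t 0 t)
      ≤ (C1 * c * C + C2 * c * C) * (1 + K) * t ^ (α - σ) := by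
    have : Xi Sg X X2 (fun s => G (y s)) (fun s => DG (y s) (G (y s))) t 0 t
        = (X t - X 0) • Sg.S t (G y₀) + X2 0 t • Sg.S t (DG y₀ (G y₀)) := by
      simp [Xi, sol.init]
    rw [this]
    refine (𝓑.N_add _ _ _ (𝓑.mem_smul _ _ _ ms1) (𝓑.mem_smul _ _ _ ms2)).trans ?_
    rw [𝓑.N_smul, 𝓑.N_smul]
    have g1 : 𝓑.N (γ - σ) (G y₀) ≤ C * (1 + K) :=
      (hG.bG _ m0).trans (by gcongr)
    have g2 : 𝓑.N (γ - α - σ) (DG y₀ (G y₀)) ≤ C * (1 + K) :=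
      (hG.bD _ m0).trans (by gcongr)
    have f1 : |X t - X 0| * 𝓑.N γ (Sg.S t (G y₀))
        ≤ (c * t ^ α) * (C1 * t ^ (-(γ - (γ - σ))) * (C * (1 + K))) := by
      refine mul_le_mul x1 (bs1.trans (by gcongr)) (𝓑.N_nonneg _ _) (by positivity)
    have f2 : |X2 0 t| * 𝓑.N γ (Sg.S t (DG y₀ (G y₀)))
        ≤ (c * t ^ (2 * α)) * (C2 * t ^ (-(γ - (γ - α - σ))) * (C * (1 + K))) := by
      refine mul_le_mul x2 (bs2.trans (by gcongr)) (𝓑.N_nonneg _ _) (by positivity)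
    have h1 : t ^ (α - σ) = t ^ α * t ^ (-(γ - (γ - σ))) := by
      rw [← Real.rpow_add htpos]; congr 1; ring
    have h2 : t ^ (α - σ) = t ^ (2 * α) * t ^ (-(γ - (γ - α - σ))) := by
      rw [← Real.rpow_add htpos]; congr 1; ring
    calc _ ≤ _ := add_le_add f1 f2
      _ = C1 * c * C * (1 + K) * (t ^ α * t ^ (-(γ - (γ - σ))))
          + C2 * c * C * (1 + K) * (t ^ (2 * α) * t ^ (-(γ - (γ - α - σ)))) := by ring
      _ = _ := by rw [← h1, ← h2]; ring
  have bS := hb t y₀ ht0 (ht.trans hT) m0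
  rw [ey]
  have t1 : 𝓑.N γ (Sg.S t y₀ + D + (E + Xi Sg X X2 (fun s => G (y s))
      (fun s => DG (y s) (G (y s))) t 0 t)) ≤ 𝓑.N γ (Sg.S t y₀) + 𝓑.N γ D + (𝓑.N γ E
      + 𝓑.N γ (Xi Sg X X2 (fun s => G (y s)) (fun s => DG (y s) (G (y s))) t 0 t)) := by
    refine (𝓑.N_add _ _ _ (𝓑.mem_add _ _ _ mS mD) (𝓑.mem_add _ _ _ mE mXi)).trans ?_
    exact add_le_add (𝓑.N_add _ _ _ mS mD) (𝓑.N_add _ _ _ mE mXi)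
  refine t1.trans ?_
  have u1 : Cp * (1 + K) * t ^ (1 - δ) ≤ Cp * (1 + K) * (Q1 * T ^ η) := by gcongr
  have u2 : Cp * (1 + K) * t ^ (α - σ) ≤ Cp * (1 + K) * (Q2 * T ^ η) := by gcongr
  have u3 : (C1 * c * C + C2 * c * C) * (1 + K) * t ^ (α - σ)
      ≤ (C1 * c * C + C2 * c * C) * (1 + K) * (Q2 * T ^ η) := by gcongr
  have u4 : 𝓑.N γ (Sg.S t y₀) + 𝓑.N γ D + (𝓑.N γ E
      + 𝓑.N γ (Xi Sg X X2 (fun s => G (y s)) (fun s => DG (y s) (G (y s))) t 0 t))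
      ≤ Cb * 𝓑.N γ y₀ + A * T ^ η + A * (T ^ η * K) := by
    have : A * T ^ η + A * (T ^ η * K) = Cp * (1 + K) * (Q1 * T ^ η)
      + Cp * (1 + K) * (Q2 * T ^ η) + (C1 * c * C + C2 * c * C) * (1 + K) * (Q2 * T ^ η) := by
      rw [hA]; ring
    linarith
  refine u4.trans ?_
  have u5 : A * T ^ η ≤ A * Tm ^ η := by gcongr
  have v1 : 0 ≤ A * Tm ^ η := by positivity
  have v2 : 0 ≤ Cb * (T ^ η * K) := by positivity
  have v3 : 0 ≤ A * Tm ^ η * (T ^ η * K) := by positivity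
  have v4 : 0 ≤ A * 𝓑.N γ y₀ := by positivity
  have v5 : 0 ≤ A * Tm ^ η * 𝓑.N γ y₀ := by positivity
  nlinarith

set_option maxHeartbeats 4000000 in
/-- remainder bound -/
lemma rem_bound {α σ γ δ θ Tm C c : ℝ} (hα : 1/3 < α) (hα' : α < 1/2) (hσ : 0 ≤ σ)
    (hδ : 0 ≤ δ) (hδ1 : δ < 1)
    (hTm : 0 < Tm) (Sg : ScaleSemigroup 𝓑) {F G : 𝓑.E → 𝓑.E}
    {DG : 𝓑.E → 𝓑.E →ₗ[ℝ] 𝓑.E} (hF : AssumptionF 𝓑 γ δ F)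
    (hG : GC 𝓑 α σ γ G DG C) (hσα : σ < α) {X : ℝ → ℝ}
    {X2 : ℝ → ℝ → ℝ} (hX : XD α Tm X X2 c) (hθ : α ≤ θ) (hθ2 : θ ≤ 2 * α) :
    ∃ Cp > (0:ℝ), ∀ (T K M : ℝ) (y₀ : 𝓑.E) (y : ℝ → 𝓑.E), 0 < T → T ≤ Tm →
      PD 𝓑 α γ T X G y K →
      0 ≤ M → (∀ t, 0 ≤ t → t ≤ T → 𝓑.N γ (y t) ≤ M) →
      IsSolution 𝓑 Sg α γ X X2 F G DG y₀ T y →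
      ∀ s t, 0 ≤ s → s < t → t ≤ T →
        𝓑.N (γ - θ) (y t - y s - (X t - X s) • G (y s))
          ≤ Cp * (1 + M + T ^ min (α - σ) (1 - δ) * K) * (t - s) ^ θ := by
  set ρ := max (δ - θ) 0 with hρ
  have hρ0 : 0 ≤ ρ := le_max_right _ _
  have hρ1 : ρ < 1 := max_lt (by linarith) one_pos
  have hρθ : θ ≤ 1 - ρ := by
    have : ρ ≤ 1 - θ := max_le (by linarith) (by linarith)
    linarith
  have hδρ : δ ≤ θ + ρ := by
    have := le_max_left (δ - θ) 0
    linarith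
  obtain ⟨Cp, hCp, hp⟩ := pieces (θ := θ) (ρ := ρ) hα hα' hσ hδ hδ1 hTm Sg hF hG hσα hX
    (by linarith) hθ2 hρ0 hρ1 hδρ
  obtain ⟨H1, hH1, h1⟩ := holdId Sg (a := γ - θ) (b := γ) (by linarith) (by linarith) hTm
  obtain ⟨H2, hH2, h2⟩ := holdId Sg (a := γ - θ) (b := γ - σ) (by linarith) (by linarith) hTm
  set a := min (γ - α - σ) (γ - θ) with ha
  have ha1 : a ≤ γ - α - σ := min_le_left _ _
  have ha2 : a ≤ γ - θ := min_le_right _ _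
  have ha3 : γ - 2 * α ≤ a := le_min (by linarith) (by linarith)
  obtain ⟨e, he, emb⟩ := 𝓑.embed_bound ha1
  obtain ⟨H3, hH3, h3⟩ := smooth Sg (a := a) (b := γ - θ) ha2 (by linarith) hTm
  set η := min (α - σ) (1 - δ) with hη
  have hη0 : 0 ≤ η := le_min (by linarith) (by linarith)
  have hη1 : η ≤ α - σ := min_le_left _ _
  have hc := hX.pos
  have hC := hG.pos
  set Q1 := Tm ^ (1 - ρ - θ) with hQ1
  set Q2 := Tm ^ (α - σ - η) with hQ2
  set Q3 := Tm ^ (α - σ) with hQ3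
  have hexp : θ ≤ 2 * α + -(γ - θ - a) := by
    have : γ - 2 * α ≤ a := ha3
    linarith
  set Q4 := Tm ^ (2 * α + -(γ - θ - a) - θ) with hQ4
  have q1 : 0 < Q1 := Real.rpow_pos_of_pos hTm _
  have q2 : 0 < Q2 := Real.rpow_pos_of_pos hTm _
  have q3 : 0 < Q3 := Real.rpow_pos_of_pos hTm _
  have q4 : 0 < Q4 := Real.rpow_pos_of_pos hTm _
  have qη : 0 < Tm ^ η := Real.rpow_pos_of_pos hTm _
  set B := H1 + Cp * Q1 + H2 * C * c * Q3 + H3 * e * C * c * Q4 with hB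
  have hB0 : 0 < B := by positivity
  refine ⟨B + Cp * Q2 + Cp * Q2 * Tm ^ η, by positivity, ?_⟩
  intro T K M y₀ y hT0 hT P hM bM sol s t hs hst ht
  have hK := P.pos
  have tη : 0 < T ^ η := Real.rpow_pos_of_pos hT0 _
  have tη' : T ^ η ≤ Tm ^ η := Real.rpow_le_rpow hT0.le hT hη0
  obtain ⟨D, E, mD, mE, mXi, bD, bE, ey⟩ := hp T K M y₀ y hT P hM bM sol s t hs hst ht
  set x := t - s with hx
  have hx0 : 0 < x := by linarith
  have hxT : x ≤ T := by linarith
  have hxTm : x ≤ Tm := by linarith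
  have xθ : 0 < x ^ θ := Real.rpow_pos_of_pos hx0 _
  have my : 𝓑.Mem γ (y s) := P.mem s hs (by linarith)
  have by' := bM s hs (by linarith)
  have mg : 𝓑.Mem (γ - σ) (G (y s)) := hG.mG _ my
  have mg' : 𝓑.Mem (γ - α - σ) (DG (y s) (G (y s))) := hG.mD _ my
  have mga : 𝓑.Mem a (DG (y s) (G (y s))) := 𝓑.mem_mono ha1 _ mg'
  have x1 := hX.h1 s t hs hst.le (ht.trans hT)
  have x2 := hX.h2 s t hs hst.le (ht.trans hT)
  rw [← hx] at x1 x2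
  obtain ⟨mS3, bS3⟩ := h3 x _ hx0 hxTm mga
  have g1 : 𝓑.N (γ - σ) (G (y s)) ≤ C * (1 + M) := (hG.bG _ my).trans (by gcongr)
  have g2 : 𝓑.N a (DG (y s) (G (y s))) ≤ e * (C * (1 + M)) := by
    refine (emb _ mg').trans ?_
    have := (hG.bD _ my).trans (show C * (1 + 𝓑.N γ (y s)) ≤ C * (1 + M) by gcongr)
    gcongr
  have decompR : y t - y s - (X t - X s) • G (y s)
      = (Sg.S x (y s) - y s) + D + E + ((X t - X s) • (Sg.S x (G (y s)) - G (y s))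
        + X2 s t • Sg.S x (DG (y s) (G (y s)))) := by
    rw [ey]
    simp only [Xi, map_add, map_smul, smul_sub]
    abel
  rw [decompR]
  have m1 : 𝓑.Mem (γ - θ) (Sg.S x (y s) - y s) :=
    𝓑.mem_mono (by linarith) _ (mem_sub (Sg.S_mem x γ _ hx0.le my) my)
  have m2 : 𝓑.Mem (γ - θ) (Sg.S x (G (y s)) - G (y s)) :=
    𝓑.mem_mono (by linarith) _ (mem_sub (Sg.S_mem x _ _ hx0.le mg) mg)
  have m2' := 𝓑.mem_smul _ (X t - X s) _ m2
  have m3' := 𝓑.mem_smul _ (X2 s t) _ mS3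
  have tri := 𝓑.N_add _ _ _ (𝓑.mem_add _ _ _ (𝓑.mem_add _ _ _ m1 mD) mE)
    (𝓑.mem_add _ _ _ m2' m3')
  have tri2 := 𝓑.N_add _ _ _ (𝓑.mem_add _ _ _ m1 mD) mE
  have tri3 := 𝓑.N_add _ _ _ m1 mD
  have tri4 := 𝓑.N_add _ _ _ m2' m3'
  rw [𝓑.N_smul, 𝓑.N_smul] at tri4
  have k1 : 𝓑.N (γ - θ) (Sg.S x (y s) - y s) ≤ H1 * (1 + M) * x ^ θ := by
    refine (h1 x _ hx0 hxTm my).trans ?_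
    rw [show γ - (γ - θ) = θ by ring]
    have : 𝓑.N γ (y s) ≤ 1 + M := by linarith
    calc H1 * x ^ θ * 𝓑.N γ (y s) ≤ H1 * x ^ θ * (1 + M) := by gcongr
      _ = _ := by ring
  have k2 : 𝓑.N (γ - θ) D ≤ Cp * Q1 * (1 + M) * x ^ θ := by
    refine bD.trans ?_
    have := pw hx0 le_rfl hxTm (by linarith : 0 ≤ θ) hρθ
    calc Cp * (1 + M) * x ^ (1 - ρ) ≤ Cp * (1 + M) * (Q1 * x ^ θ) := by gcongr
      _ = _ := by ring
  have k3 : 𝓑.N (γ - θ) E ≤ Cp * Q2 * (T ^ η + T ^ η * K) * x ^ θ := by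
    refine bE.trans ?_
    have h := pw hx0 hxT hT hη0 hη1
    rw [Real.rpow_add hx0]
    calc Cp * (1 + K) * (x ^ (α - σ) * x ^ θ)
        ≤ Cp * (1 + K) * ((Q2 * T ^ η) * x ^ θ) := by gcongr
      _ = _ := by ring
  have k4 : |X t - X s| * 𝓑.N (γ - θ) (Sg.S x (G (y s)) - G (y s))
      ≤ H2 * C * c * Q3 * (1 + M) * x ^ θ := by
    have b := h2 x _ hx0 hxTm mg
    have ee : x ^ α * x ^ (γ - σ - (γ - θ)) = x ^ (α - σ) * x ^ θ := by
      rw [← Real.rpow_add hx0, ← Real.rpow_add hx0]; congr 1; ring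
    have hq : x ^ (α - σ) ≤ Q3 := Real.rpow_le_rpow hx0.le hxTm (by linarith)
    calc _ ≤ (c * x ^ α) * (H2 * x ^ (γ - σ - (γ - θ)) * (C * (1 + M))) :=
          mul_le_mul x1 (b.trans (by gcongr)) (𝓑.N_nonneg _ _) (by positivity)
      _ = H2 * C * c * (1 + M) * (x ^ α * x ^ (γ - σ - (γ - θ))) := by ring
      _ = H2 * C * c * (1 + M) * (x ^ (α - σ) * x ^ θ) := by rw [ee]
      _ ≤ H2 * C * c * (1 + M) * (Q3 * x ^ θ) := by gcongr
      _ = _ := by ring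
  have k5 : |X2 s t| * 𝓑.N (γ - θ) (Sg.S x (DG (y s) (G (y s))))
      ≤ H3 * e * C * c * Q4 * (1 + M) * x ^ θ := by
    have hq := pw hx0 le_rfl hxTm (by linarith : 0 ≤ θ) hexp
    rw [Real.rpow_add hx0] at hq
    calc _ ≤ (c * x ^ (2 * α)) * (H3 * x ^ (-(γ - θ - a)) * (e * (C * (1 + M)))) :=
          mul_le_mul x2 (bS3.trans (by gcongr)) (𝓑.N_nonneg _ _) (by positivity)
      _ = H3 * e * C * c * (1 + M) * (x ^ (2 * α) * x ^ (-(γ - θ - a))) := by ring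
      _ ≤ H3 * e * C * c * (1 + M) * (Q4 * x ^ θ) := by gcongr
      _ = _ := by ring
  have tot : 𝓑.N (γ - θ) ((Sg.S x (y s) - y s) + D + E + ((X t - X s) • (Sg.S x (G (y s)) - G (y s))
        + X2 s t • Sg.S x (DG (y s) (G (y s)))))
      ≤ (B * (1 + M) + Cp * Q2 * (T ^ η + T ^ η * K)) * x ^ θ := by
    have : (B * (1 + M) + Cp * Q2 * (T ^ η + T ^ η * K)) * x ^ θ = H1 * (1 + M) * x ^ θ
      + Cp * Q1 * (1 + M) * x ^ θ + Cp * Q2 * (T ^ η + T ^ η * K) * x ^ θ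
      + (H2 * C * c * Q3 * (1 + M) * x ^ θ + H3 * e * C * c * Q4 * (1 + M) * x ^ θ) := by
      rw [hB]; ring
    linarith
  refine tot.trans (mul_le_mul_of_nonneg_right ?_ xθ.le)
  have w1 : Cp * Q2 * T ^ η ≤ Cp * Q2 * Tm ^ η := by gcongr
  have w2 : 0 ≤ B * (T ^ η * K) := by positivity
  have w3 : 0 ≤ Cp * Q2 * (1 + M) := by positivity
  have w4 : 0 ≤ Cp * Q2 * Tm ^ η * M := by positivity
  have w5 : 0 ≤ Cp * Q2 * Tm ^ η * (T ^ η * K) := by positivity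
  nlinarith

end RE

namespace RE

open Set Filter Topology

variable {𝓑 : BanachScale}

lemma sup_bdd {θ T : ℝ} {f : ℝ → 𝓑.E} (hm : ∀ t : ℝ, 0 ≤ t → t ≤ T → 𝓑.Mem θ (f t))
    (hc : ∀ t : ℝ, 0 ≤ t → t ≤ T → ∀ ε > (0:ℝ), ∃ δ > (0:ℝ), ∀ s : ℝ, 0 ≤ s → s ≤ T →
      |s - t| < δ → 𝓑.N θ (f s - f t) < ε) :
    BddAbove {r : ℝ | ∃ t : ℝ, 0 ≤ t ∧ t ≤ T ∧ r = 𝓑.N θ (f t)} := by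
  have hcont : ContinuousOn (fun t => 𝓑.N θ (f t)) (Icc 0 T) := by
    rw [Metric.continuousOn_iff]
    intro t ht ε hε
    obtain ⟨d, hd, h⟩ := hc t ht.1 ht.2 ε hε
    refine ⟨d, hd, fun s hs hst => ?_⟩
    rw [Real.dist_eq] at hst ⊢
    have h0 := h s hs.1 hs.2 hst
    have m1 := hm s hs.1 hs.2
    have m2 := hm t ht.1 ht.2
    have a1 := N_le_sub_add m1 m2
    have a2 := N_le_sub_add m2 m1
    rw [N_sub_comm] at a2
    rw [abs_lt]
    constructor <;> linarith
  have := (isCompact_Icc (a := (0:ℝ)) (b := T)).bddAbove_image hcont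
  refine this.mono ?_
  rintro r ⟨t, h0, h1, rfl⟩
  exact ⟨t, ⟨h0, h1⟩, rfl⟩

lemma holder_bdd {θ η T : ℝ} {R : ℝ → ℝ → 𝓑.E}
    (h : ∃ C : ℝ, ∀ s t : ℝ, 0 ≤ s → s ≤ t → t ≤ T → 𝓑.N θ (R s t) ≤ C * (t - s) ^ η) :
    BddAbove {r : ℝ | ∃ s t : ℝ, 0 ≤ s ∧ s < t ∧ t ≤ T ∧ r = 𝓑.N θ (R s t) / (t - s) ^ η} := by
  obtain ⟨C, hC⟩ := h
  refine ⟨C, ?_⟩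
  rintro r ⟨s, t, hs, hst, ht, rfl⟩
  rw [div_le_iff₀ (Real.rpow_pos_of_pos (by linarith) _)]
  exact hC s t hs hst.le ht

lemma sup_nonneg (θ T : ℝ) (f : ℝ → 𝓑.E) : 0 ≤ scaleSupNorm 𝓑 θ T f := by
  apply Real.sSup_nonneg
  rintro r ⟨t, _, _, rfl⟩
  exact 𝓑.N_nonneg _ _

lemma holder_nonneg (θ η T : ℝ) (R : ℝ → ℝ → 𝓑.E) : 0 ≤ scaleHolderNorm2 𝓑 θ η T R := by
  apply Real.sSup_nonneg
  rintro r ⟨s, t, _, hst, _, rfl⟩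
  exact div_nonneg (𝓑.N_nonneg _ _) (Real.rpow_nonneg (by linarith) _)

lemma holder_le {θ η T B : ℝ} {R : ℝ → ℝ → 𝓑.E} (hB : 0 ≤ B)
    (h : ∀ s t : ℝ, 0 ≤ s → s < t → t ≤ T → 𝓑.N θ (R s t) ≤ B * (t - s) ^ η) :
    scaleHolderNorm2 𝓑 θ η T R ≤ B := by
  refine Real.sSup_le ?_ hB
  rintro r ⟨s, t, hs, hst, ht, rfl⟩
  rw [div_le_iff₀ (Real.rpow_pos_of_pos (by linarith) _)]
  exact h s t hs hst ht

lemma sup_le {θ T B : ℝ} {f : ℝ → 𝓑.E} (hB : 0 ≤ B)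
    (h : ∀ t : ℝ, 0 ≤ t → t ≤ T → 𝓑.N θ (f t) ≤ B) : scaleSupNorm 𝓑 θ T f ≤ B := by
  refine Real.sSup_le ?_ hB
  rintro r ⟨t, h0, h1, rfl⟩
  exact h t h0 h1

lemma le_holder {θ η T : ℝ} {R : ℝ → ℝ → 𝓑.E}
    (h : ∃ C : ℝ, ∀ s t : ℝ, 0 ≤ s → s ≤ t → t ≤ T → 𝓑.N θ (R s t) ≤ C * (t - s) ^ η)
    {s t : ℝ} (hs : 0 ≤ s) (hst : s < t) (ht : t ≤ T) :
    𝓑.N θ (R s t) ≤ scaleHolderNorm2 𝓑 θ η T R * (t - s) ^ η := by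
  rw [← div_le_iff₀ (Real.rpow_pos_of_pos (by linarith) _)]
  exact le_csSup (holder_bdd h) ⟨s, t, hs, hst, ht, rfl⟩

lemma crp_nonneg (α γ T : ℝ) (X : ℝ → ℝ) (y y' : ℝ → 𝓑.E) : 0 ≤ crpNorm 𝓑 α γ T X y y' := by
  unfold crpNorm scaleHolderNorm
  have := sup_nonneg γ T y
  have := sup_nonneg (γ - α) T y'
  have := holder_nonneg (γ - 2 * α) α T (fun s t => y' t - y' s)
  have := holder_nonneg (γ - α) α T (gubRemainder 𝓑 X y y')
  have := holder_nonneg (γ - 2 * α) (2 * α) T (gubRemainder 𝓑 X y y')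
  linarith

lemma exists_PD {α γ T Tm c : ℝ} (hα : 0 < α) (hT : T ≤ Tm) {X : ℝ → ℝ} {X2 : ℝ → ℝ → ℝ}
    (hX : XD α Tm X X2 c) {G : 𝓑.E → 𝓑.E} {y : ℝ → 𝓑.E}
    (h : IsControlledPath 𝓑 α γ T X y fun t => G (y t)) :
    PD 𝓑 α γ T X G y ((1 + c) * crpNorm 𝓑 α γ T X y fun t => G (y t)) := by
  have n1 := sup_nonneg γ T y
  have n2 := sup_nonneg (γ - α) T (fun t => G (y t))
  have n3 := holder_nonneg (γ - 2 * α) α T (fun s t => G (y t) - G (y s))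
  have n4 := holder_nonneg (γ - α) α T (gubRemainder 𝓑 X y fun t => G (y t))
  have n5 := holder_nonneg (γ - 2 * α) (2 * α) T (gubRemainder 𝓑 X y fun t => G (y t))
  have hK0 := crp_nonneg α γ T X y (fun t => G (y t))
  have hdef : crpNorm 𝓑 α γ T X y (fun t => G (y t)) = scaleSupNorm 𝓑 γ T y
    + scaleSupNorm 𝓑 (γ - α) T (fun t => G (y t))
    + scaleHolderNorm2 𝓑 (γ - 2 * α) α T (fun s t => G (y t) - G (y s))
    + scaleHolderNorm2 𝓑 (γ - α) α T (gubRemainder 𝓑 X y fun t => G (y t))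
    + scaleHolderNorm2 𝓑 (γ - 2 * α) (2 * α) T (gubRemainder 𝓑 X y fun t => G (y t)) := rfl
  generalize crpNorm 𝓑 α γ T X y (fun t => G (y t)) = K0 at *
  have hc := hX.pos
  have hcK : 0 ≤ c * K0 := by positivity
  have b2 : ∀ t, 0 ≤ t → t ≤ T → 𝓑.N (γ - α) (G (y t)) ≤ K0 := by
    intro t h0 h1
    have : 𝓑.N (γ - α) (G (y t)) ≤ scaleSupNorm 𝓑 (γ - α) T (fun t => G (y t)) :=
      le_csSup (sup_bdd h.mem_y' h.cont_y') ⟨t, h0, h1, rfl⟩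
    linarith
  refine ⟨by positivity, h.mem_y, ?_, ?_, ?_⟩
  · intro t h0 h1
    have : 𝓑.N γ (y t) ≤ scaleSupNorm 𝓑 γ T y :=
      le_csSup (sup_bdd h.mem_y h.cont_y) ⟨t, h0, h1, rfl⟩
    linarith
  · intro s t hs hst ht
    have r := le_holder h.rem_alpha hs hst ht
    have e : y t - y s = gubRemainder 𝓑 X y (fun t => G (y t)) s t + (X t - X s) • G (y s) := by
      simp [gubRemainder]
    have p : 0 ≤ (t - s) ^ α := Real.rpow_nonneg (by linarith) _
    have mt := 𝓑.mem_mono (show γ - α ≤ γ by linarith) _ (h.mem_y t (by linarith) ht)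
    have ms := 𝓑.mem_mono (show γ - α ≤ γ by linarith) _ (h.mem_y s hs (by linarith))
    have mg : 𝓑.Mem (γ - α) (G (y s)) := h.mem_y' s hs (by linarith)
    have mX := 𝓑.mem_smul _ (X t - X s) _ mg
    have mR : 𝓑.Mem (γ - α) (gubRemainder 𝓑 X y (fun t => G (y t)) s t) :=
      mem_sub (mem_sub mt ms) mX
    rw [e]
    refine (𝓑.N_add _ _ _ mR mX).trans ?_
    rw [𝓑.N_smul]
    have hx := hX.h1 s t hs hst.le (ht.trans hT)
    have := mul_le_mul hx (b2 s hs (by linarith)) (𝓑.N_nonneg _ _) (by positivity)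
    have r2 : scaleHolderNorm2 𝓑 (γ - α) α T (gubRemainder 𝓑 X y fun t => G (y t)) * (t - s) ^ α
      ≤ K0 * (t - s) ^ α := mul_le_mul_of_nonneg_right (by linarith) p
    calc _ ≤ K0 * (t - s) ^ α + c * (t - s) ^ α * K0 := by linarith
      _ = _ := by ring
  · intro s t hs hst ht
    have r := le_holder h.rem_two_alpha hs hst ht
    have p : 0 ≤ (t - s) ^ (2 * α) := Real.rpow_nonneg (by linarith) _
    refine r.trans (mul_le_mul_of_nonneg_right ?_ p)
    linarith

set_option maxHeartbeats 4000000 in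
lemma main_bound (α γ δ σ Tmax : ℝ) (hα : 1/3 < α) (hα' : α < 1/2)
    (hδ : 0 ≤ δ) (hδ' : δ < 1) (hσ : 0 ≤ σ) (hσα : σ < α) (hTmax : 0 < Tmax)
    (𝓑 : BanachScale) (Sg : ScaleSemigroup 𝓑) (RP : RoughPath α Tmax)
    (F G : 𝓑.E → 𝓑.E) (DG : 𝓑.E → 𝓑.E →ₗ[ℝ] 𝓑.E)
    (D2G : 𝓑.E → 𝓑.E →ₗ[ℝ] 𝓑.E →ₗ[ℝ] 𝓑.E)
    (D3G : 𝓑.E → 𝓑.E →ₗ[ℝ] 𝓑.E →ₗ[ℝ] 𝓑.E →ₗ[ℝ] 𝓑.E)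
    (hF : AssumptionF 𝓑 γ δ F) (hG : AssumptionG 𝓑 α σ γ G DG D2G D3G) :
    ∃ C > (0:ℝ), ∀ T : ℝ, 0 < T → T ≤ Tmax → ∀ (y₀ : 𝓑.E) (y : ℝ → 𝓑.E),
      𝓑.Mem γ y₀ → IsSolution 𝓑 Sg α γ RP.X RP.X2 F G DG y₀ T y →
      crpNorm 𝓑 α γ T RP.X y (fun t => G (y t))
        ≤ C * (1 + 𝓑.N γ y₀
            + T ^ min (α - σ) (1 - δ) * crpNorm 𝓑 α γ T RP.X y (fun t => G (y t))) := by
  obtain ⟨C, hGC⟩ := exists_GC (by linarith) hσ hσα hG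
  obtain ⟨c, hX⟩ := exists_XD RP
  have hc := hX.pos
  have hC := hGC.pos
  obtain ⟨C1, hC1, h1⟩ := sup_bound hα hα' hσ hδ hδ' hTmax Sg hF hGC hσα hX
  obtain ⟨C4, hC4, h4⟩ := rem_bound (θ := α) hα hα' hσ hδ hδ' hTmax Sg hF hGC hσα hX le_rfl
    (by linarith)
  obtain ⟨C5, hC5, h5⟩ := rem_bound (θ := 2 * α) hα hα' hσ hδ hδ' hTmax Sg hF hGC hσα hX
    (by linarith) le_rfl
  set A1 := C1 * (1 + c) with hA1
  have a1 : 0 < A1 := by positivity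
  set A2 := C * (1 + A1) with hA2
  have a2 : 0 < A2 := by positivity
  set A4 := C4 * (1 + A1 + (1 + c)) with hA4
  have a4 : 0 < A4 := by positivity
  set A5 := C5 * (1 + A1 + (1 + c)) with hA5
  have a5 : 0 < A5 := by positivity
  set A3 := C * (c * A2 + A4) with hA3
  have a3 : 0 < A3 := by positivity
  refine ⟨A1 + A2 + A3 + A4 + A5, by positivity, ?_⟩
  intro T hT0 hT y₀ y m0 sol
  have P := exists_PD (by linarith) hT hX sol.controlled
  have hK0 := crp_nonneg α γ T RP.X y (fun t => G (y t))
  have hN := 𝓑.N_nonneg γ y₀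
  have tη : 0 < T ^ min (α - σ) (1 - δ) := Real.rpow_pos_of_pos hT0 _
  set K0 := crpNorm 𝓑 α γ T RP.X y (fun t => G (y t)) with hK0def
  set τ := T ^ min (α - σ) (1 - δ) with hτ
  set Y := 1 + 𝓑.N γ y₀ + τ * K0 with hY
  have hτK : 0 ≤ τ * K0 := by positivity
  have hY1 : 1 ≤ Y := by linarith
  have hY0 : 0 < Y := by linarith
  have hYK : τ * K0 ≤ Y := by linarith
  have i1 : ∀ t, 0 ≤ t → t ≤ T → 𝓑.N γ (y t) ≤ A1 * Y := by
    intro t ht0 ht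
    refine (h1 T _ y₀ y hT0 hT P sol t ht0 ht).trans ?_
    rw [hA1, mul_assoc]
    refine mul_le_mul_of_nonneg_left ?_ hC1.le
    have e : 0 ≤ c * (1 + 𝓑.N γ y₀) := by positivity
    calc 1 + 𝓑.N γ y₀ + τ * ((1 + c) * K0)
        ≤ 1 + 𝓑.N γ y₀ + τ * ((1 + c) * K0) + c * (1 + 𝓑.N γ y₀) := by linarith
      _ = _ := by rw [hY]; ring
  have hM : 0 ≤ A1 * Y := by positivity
  have mem : ∀ t, 0 ≤ t → t ≤ T → 𝓑.Mem γ (y t) := P.mem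
  have i2 : ∀ t, 0 ≤ t → t ≤ T → 𝓑.N (γ - α) (G (y t)) ≤ A2 * Y := by
    intro t ht0 ht
    refine (hGC.bGa _ (mem t ht0 ht)).trans ?_
    rw [hA2, mul_assoc]
    refine mul_le_mul_of_nonneg_left ?_ hC.le
    have := i1 t ht0 ht
    linarith
  have hsum : 1 + A1 * Y + τ * ((1 + c) * K0) ≤ (1 + A1 + (1 + c)) * Y := by
    have : (1 + c) * (τ * K0) ≤ (1 + c) * Y := by gcongr
    linarith
  have i4 : ∀ s t, 0 ≤ s → s < t → t ≤ T →
      𝓑.N (γ - α) (gubRemainder 𝓑 RP.X y (fun t => G (y t)) s t) ≤ A4 * Y * (t - s) ^ α := by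
    intro s t hs hst ht
    refine (h4 T _ _ y₀ y hT0 hT P hM i1 sol s t hs hst ht).trans ?_
    refine mul_le_mul_of_nonneg_right ?_ (Real.rpow_nonneg (by linarith) _)
    exact (mul_le_mul_of_nonneg_left hsum hC4.le).trans (le_of_eq (mul_assoc _ _ _).symm)
  have i5 : ∀ s t, 0 ≤ s → s < t → t ≤ T →
      𝓑.N (γ - 2 * α) (gubRemainder 𝓑 RP.X y (fun t => G (y t)) s t)
        ≤ A5 * Y * (t - s) ^ (2 * α) := by
    intro s t hs hst ht
    refine (h5 T _ _ y₀ y hT0 hT P hM i1 sol s t hs hst ht).trans ?_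
    refine mul_le_mul_of_nonneg_right ?_ (Real.rpow_nonneg (by linarith) _)
    exact (mul_le_mul_of_nonneg_left hsum hC5.le).trans (le_of_eq (mul_assoc _ _ _).symm)
  have i3 : ∀ s t, 0 ≤ s → s < t → t ≤ T →
      𝓑.N (γ - 2 * α) (G (y t) - G (y s)) ≤ A3 * Y * (t - s) ^ α := by
    intro s t hs hst ht
    have mt := 𝓑.mem_mono (show γ - α ≤ γ by linarith) _ (mem t (by linarith) ht)
    have ms := 𝓑.mem_mono (show γ - α ≤ γ by linarith) _ (mem s hs (by linarith))
    have mg : 𝓑.Mem (γ - α) (G (y s)) := sol.controlled.mem_y' s hs (by linarith)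
    have mX := 𝓑.mem_smul _ (RP.X t - RP.X s) _ mg
    have mR : 𝓑.Mem (γ - α) (gubRemainder 𝓑 RP.X y (fun t => G (y t)) s t) :=
      mem_sub (mem_sub mt ms) mX
    have p : 0 ≤ (t - s) ^ α := Real.rpow_nonneg (by linarith) _
    refine (hGC.lipG _ _ mt ms).trans ?_
    have e : y t - y s = gubRemainder 𝓑 RP.X y (fun t => G (y t)) s t
        + (RP.X t - RP.X s) • G (y s) := by
      simp [gubRemainder]
    have n := 𝓑.N_add _ _ _ mR mX
    rw [← e, 𝓑.N_smul] at n
    have hx := hX.h1 s t hs hst.le (ht.trans hT)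
    have := mul_le_mul hx (i2 s hs (by linarith)) (𝓑.N_nonneg _ _) (by positivity)
    have r := i4 s t hs hst ht
    rw [hA3, mul_assoc, mul_assoc]
    refine mul_le_mul_of_nonneg_left ?_ hC.le
    calc _ ≤ A4 * Y * (t - s) ^ α + c * (t - s) ^ α * (A2 * Y) := by linarith
      _ = _ := by ring
  have f1 := sup_le hM i1
  have f2 := sup_le (f := fun t => G (y t)) (by positivity : 0 ≤ A2 * Y) i2
  have f3 := holder_le (R := fun s t => G (y t) - G (y s)) (by positivity : 0 ≤ A3 * Y) i3
  have f4 := holder_le (by positivity : 0 ≤ A4 * Y) i4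
  have f5 := holder_le (by positivity : 0 ≤ A5 * Y) i5
  have hdef : K0 = scaleSupNorm 𝓑 γ T y
    + scaleSupNorm 𝓑 (γ - α) T (fun t => G (y t))
    + scaleHolderNorm2 𝓑 (γ - 2 * α) α T (fun s t => G (y t) - G (y s))
    + scaleHolderNorm2 𝓑 (γ - α) α T (gubRemainder 𝓑 RP.X y fun t => G (y t))
    + scaleHolderNorm2 𝓑 (γ - 2 * α) (2 * α) T (gubRemainder 𝓑 RP.X y fun t => G (y t)) := rfl
  have hgoal : (A1 + A2 + A3 + A4 + A5) * Y = A1 * Y + A2 * Y + A3 * Y + A4 * Y + A5 * Y := by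
    ring
  rw [hgoal]
  linarith

end RE

/-- **a-priori estimate.** Under assumptions (F) and (G), if `(y, G(y))` is a
solution of the rough evolution equation on `[0,T]` with initial data `y₀ ∈ B_γ`, then with
`η = (α - σ) ∧ (1 - δ)`,
`‖y, G(y)‖_{X,2α,γ} ≲ 1 + |y₀|_{B_γ} + T^η ‖y, G(y)‖_{X,2α,γ}`, the constant being
independent of `y₀` and uniform in `T` on compact intervals. -/
theorem statement13 (α γ δ σ Tmax : ℝ) (hα : 1/3 < α) (hα' : α < 1/2)
    (hδ : 0 ≤ δ) (hδ' : δ < 1) (hσ : 0 ≤ σ) (hσα : σ < α) (hTmax : 0 < Tmax)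
    (𝓑 : BanachScale) (Sg : ScaleSemigroup 𝓑) (RP : RoughPath α Tmax)
    (F G : 𝓑.E → 𝓑.E) (DG : 𝓑.E → 𝓑.E →ₗ[ℝ] 𝓑.E)
    (D2G : 𝓑.E → 𝓑.E →ₗ[ℝ] 𝓑.E →ₗ[ℝ] 𝓑.E)
    (D3G : 𝓑.E → 𝓑.E →ₗ[ℝ] 𝓑.E →ₗ[ℝ] 𝓑.E →ₗ[ℝ] 𝓑.E)
    (hF : AssumptionF 𝓑 γ δ F) (hG : AssumptionG 𝓑 α σ γ G DG D2G D3G) :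
    ∃ C > (0:ℝ), ∀ T : ℝ, 0 < T → T ≤ Tmax → ∀ (y₀ : 𝓑.E) (y : ℝ → 𝓑.E),
      𝓑.Mem γ y₀ → IsSolution 𝓑 Sg α γ RP.X RP.X2 F G DG y₀ T y →
      crpNorm 𝓑 α γ T RP.X y (fun t => G (y t))
        ≤ C * (1 + 𝓑.N γ y₀
            + T ^ min (α - σ) (1 - δ) * crpNorm 𝓑 α γ T RP.X y (fun t => G (y t))) := by
  exact RE.main_bound α γ δ σ Tmax hα hα' hδ hδ' hσ hσα hTmax 𝓑 Sg RP F G DG D2G D3G hF hG
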